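/- Assume Π > 0 and Γ > 0 at every (x,y) ∈ U × (ℝⁿ∖{0}), and set D^i = 2G^i − 2·^αG^i, where G^i are the spray coefficients of F. Then at every (x,y): 2Ψ_s·^βs_{i0} + 2Ψ_s̄·^γs_{i0} = ℓ_{ir}D^r − (1/α)[Ψ_ss·^βr_00 + Ψ_ss̄·^γr_00]·h_i − (1/α)[Ψ_ss̄·^βr_00 + Ψ_s̄s̄·^γr_00]·h̄_i, where ℓ_{ir} = ∂²F/∂y^i∂y^r, h_i = b_i − s·∂α/∂y^i, h̄_i = γ_i − s̄·∂α/∂y^i. -/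

import Mathlib

noncomputable section

open Set

/-- `a^{ij} u_i v_j` : the pairing of two covectors via the inverse matrix. -/
def quadInv {n : ℕ} (a : Matrix (Fin n) (Fin n) ℝ) (u v : Fin n → ℝ) : ℝ :=
  ∑ i, ∑ j, a⁻¹ i j * u i * v j

/-- `α(y) = √(a_{ij} y^i y^j)`. -/
def alph {n : ℕ} (a : Matrix (Fin n) (Fin n) ℝ) (y : Fin n → ℝ) : ℝ :=
  Real.sqrt (∑ i, ∑ j, a i j * y i * y j)

/-- `v_i y^i`. -/
def oneForm {n : ℕ} (v y : Fin n → ℝ) : ℝ := ∑ i, v i * y i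

/-- `s(y) = v_i y^i / α(y)`. -/
def sVar {n : ℕ} (a : Matrix (Fin n) (Fin n) ℝ) (v y : Fin n → ℝ) : ℝ :=
  oneForm v y / alph a y

/-- The (α,β,γ)-metric `F(y) = α·Ψ(s, s̄)`. -/
def Fm {n : ℕ} (a : Matrix (Fin n) (Fin n) ℝ) (bv gv : Fin n → ℝ)
    (Ψ : ℝ → ℝ → ℝ) (y : Fin n → ℝ) : ℝ :=
  alph a y * Ψ (sVar a bv y) (sVar a gv y)

/-- Partial derivative of a function on `ℝⁿ` in the `i`-th coordinate direction. -/
def pd {n : ℕ} (f : (Fin n → ℝ) → ℝ) (y : Fin n → ℝ) (i : Fin n) : ℝ :=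
  fderiv ℝ f y (Pi.single i 1)

/-- Second partial derivative. -/
def pd2 {n : ℕ} (f : (Fin n → ℝ) → ℝ) (y : Fin n → ℝ) (i j : Fin n) : ℝ :=
  pd (fun z => pd f z j) y i

/-- Partial derivative with respect to the first slot (`∂/∂s`). -/
def Ds (Ψ : ℝ → ℝ → ℝ) : ℝ → ℝ → ℝ := fun p q => deriv (fun u => Ψ u q) p

/-- Partial derivative with respect to the second slot (`∂/∂s̄`). -/
def Dt (Ψ : ℝ → ℝ → ℝ) : ℝ → ℝ → ℝ := fun p q => deriv (fun v => Ψ p v) q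

/-- `h_i = v_i − s·α_i`. -/
def hl {n : ℕ} (a : Matrix (Fin n) (Fin n) ℝ) (v y : Fin n → ℝ) (i : Fin n) : ℝ :=
  v i - sVar a v y * pd (alph a) y i

/-- Fundamental tensor `g_{ij} = ½ ∂²(F²)/∂yⁱ∂yʲ`. -/
def fundT {n : ℕ} (F : (Fin n → ℝ) → ℝ) (y : Fin n → ℝ) (i j : Fin n) : ℝ :=
  (1 / 2) * pd2 (fun z => F z ^ 2) y i j

/-- `Π = Ψ − sΨ_s − s̄Ψ_s̄`. -/
def PiF (Ψ : ℝ → ℝ → ℝ) (p q : ℝ) : ℝ := Ψ p q - p * Ds Ψ p q - q * Dt Ψ p q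

/-- `J = (Ψ_ss Ψ_s̄s̄ − Ψ_ss̄²)/Π`. -/
def JF (Ψ : ℝ → ℝ → ℝ) (p q : ℝ) : ℝ :=
  (Ds (Ds Ψ) p q * Dt (Dt Ψ) p q - Dt (Ds Ψ) p q ^ 2) / PiF Ψ p q

/-- `Γ`, with `B = b²`, `G = g²`, `Θ = θ` as real parameters. -/
def GammaF (Ψ : ℝ → ℝ → ℝ) (B G Θ p q : ℝ) : ℝ :=
  PiF Ψ p q + (B - p ^ 2) * Ds (Ds Ψ) p q + (G - q ^ 2) * Dt (Dt Ψ) p q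
    + 2 * (Θ - p * q) * Dt (Ds Ψ) p q
    + ((B - p ^ 2) * (G - q ^ 2) - (Θ - p * q) ^ 2) * JF Ψ p q

/-- `ρ = Ψ(Ψ − sΨ_s − s̄Ψ_s̄)`. -/
def rhoF (Ψ : ℝ → ℝ → ℝ) : ℝ → ℝ → ℝ := fun p q => Ψ p q * PiF Ψ p q

/-- `ρ₀ = ΨΨ_ss + Ψ_s²`. -/
def rho0F (Ψ : ℝ → ℝ → ℝ) : ℝ → ℝ → ℝ := fun p q => Ψ p q * Ds (Ds Ψ) p q + Ds Ψ p q ^ 2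

/-- `ρ̄₀ = ΨΨ_s̄s̄ + Ψ_s̄²`. -/
def rhobar0F (Ψ : ℝ → ℝ → ℝ) : ℝ → ℝ → ℝ := fun p q => Ψ p q * Dt (Dt Ψ) p q + Dt Ψ p q ^ 2

/-- `ρ₃ = ΨΨ_ss̄ + Ψ_sΨ_s̄`. -/
def rho3F (Ψ : ℝ → ℝ → ℝ) : ℝ → ℝ → ℝ :=
  fun p q => Ψ p q * Dt (Ds Ψ) p q + Ds Ψ p q * Dt Ψ p q

/-- `ρ₁ = ΨΨ_s − sρ₀ − s̄ρ₃`. -/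
def rho1F (Ψ : ℝ → ℝ → ℝ) : ℝ → ℝ → ℝ :=
  fun p q => Ψ p q * Ds Ψ p q - p * rho0F Ψ p q - q * rho3F Ψ p q

/-- `ρ̄₁ = ΨΨ_s̄ − s̄ρ̄₀ − sρ₃`. -/
def rhobar1F (Ψ : ℝ → ℝ → ℝ) : ℝ → ℝ → ℝ :=
  fun p q => Ψ p q * Dt Ψ p q - q * rhobar0F Ψ p q - p * rho3F Ψ p q

/-- `ρ₂ = −sρ₁ − s̄ρ̄₁`. -/
def rho2F (Ψ : ℝ → ℝ → ℝ) : ℝ → ℝ → ℝ :=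
  fun p q => -p * rho1F Ψ p q - q * rhobar1F Ψ p q

/-- `π₁ = Ψ_s̄Ψ_ss̄ − Ψ_sΨ_s̄s̄ + sΨJ`. -/
def pi1F (Ψ : ℝ → ℝ → ℝ) (p q : ℝ) : ℝ :=
  Dt Ψ p q * Dt (Ds Ψ) p q - Ds Ψ p q * Dt (Dt Ψ) p q + p * Ψ p q * JF Ψ p q

/-- `π₂ = Ψ_sΨ_ss̄ − Ψ_s̄Ψ_ss + s̄ΨJ`. -/
def pi2F (Ψ : ℝ → ℝ → ℝ) (p q : ℝ) : ℝ :=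
  Ds Ψ p q * Dt (Ds Ψ) p q - Dt Ψ p q * Ds (Ds Ψ) p q + q * Ψ p q * JF Ψ p q


/-- Christoffel symbols `Γ^k_{ij}` of the Riemannian metric `a_{ij}(x)`. -/
def chr {n : ℕ} (a : (Fin n → ℝ) → Matrix (Fin n) (Fin n) ℝ) (x : Fin n → ℝ)
    (k i j : Fin n) : ℝ :=
  (1 / 2) * ∑ l, (a x)⁻¹ k l *
    (pd (fun z => a z j l) x i + pd (fun z => a z i l) x j - pd (fun z => a z i j) x l)

/-- Geodesic coefficients `^αG^i = ½ Γ^i_{jk} y^j y^k` of `α`. -/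
def alphaG {n : ℕ} (a : (Fin n → ℝ) → Matrix (Fin n) (Fin n) ℝ) (x y : Fin n → ℝ)
    (i : Fin n) : ℝ :=
  (1 / 2) * ∑ j, ∑ k, chr a x i j k * y j * y k

/-- Covariant derivative `v_{i|j}` of a 1-form `v` with respect to `α`. -/
def covD {n : ℕ} (a : (Fin n → ℝ) → Matrix (Fin n) (Fin n) ℝ)
    (v : (Fin n → ℝ) → Fin n → ℝ) (x : Fin n → ℝ) (i j : Fin n) : ℝ :=
  pd (fun z => v z i) x j - ∑ k, v x k * chr a x k i j

/-- `r_{ij} = ½(v_{i|j} + v_{j|i})`. -/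
def rSym {n : ℕ} (a : (Fin n → ℝ) → Matrix (Fin n) (Fin n) ℝ)
    (v : (Fin n → ℝ) → Fin n → ℝ) (x : Fin n → ℝ) (i j : Fin n) : ℝ :=
  (1 / 2) * (covD a v x i j + covD a v x j i)

/-- `s_{ij} = ½(v_{i|j} − v_{j|i})`. -/
def sSym {n : ℕ} (a : (Fin n → ℝ) → Matrix (Fin n) (Fin n) ℝ)
    (v : (Fin n → ℝ) → Fin n → ℝ) (x : Fin n → ℝ) (i j : Fin n) : ℝ :=
  (1 / 2) * (covD a v x i j - covD a v x j i)

/-- `r_{00} = r_{ij} y^i y^j`. -/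
def r00 {n : ℕ} (a : (Fin n → ℝ) → Matrix (Fin n) (Fin n) ℝ)
    (v : (Fin n → ℝ) → Fin n → ℝ) (x y : Fin n → ℝ) : ℝ :=
  ∑ i, ∑ j, rSym a v x i j * y i * y j

/-- `s_{j0} = s_{jk} y^k`. -/
def s0low {n : ℕ} (a : (Fin n → ℝ) → Matrix (Fin n) (Fin n) ℝ)
    (v : (Fin n → ℝ) → Fin n → ℝ) (x y : Fin n → ℝ) (j : Fin n) : ℝ :=
  ∑ k, sSym a v x j k * y k

/-- `s^i_0 = a^{ij} s_{j0}`. -/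
def sUp0 {n : ℕ} (a : (Fin n → ℝ) → Matrix (Fin n) (Fin n) ℝ)
    (v : (Fin n → ℝ) → Fin n → ℝ) (x y : Fin n → ℝ) (i : Fin n) : ℝ :=
  ∑ j, (a x)⁻¹ i j * s0low a v x y j

/-- Contraction `w_i · (s of v)^i_0`. -/
def contrS {n : ℕ} (a : (Fin n → ℝ) → Matrix (Fin n) (Fin n) ℝ)
    (v w : (Fin n → ℝ) → Fin n → ℝ) (x y : Fin n → ℝ) : ℝ :=
  ∑ i, w x i * sUp0 a v x y i

/-- Fundamental tensor of `F(x,·)` as a matrix. -/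
def gmatF {n : ℕ} (F : (Fin n → ℝ) → (Fin n → ℝ) → ℝ) (x y : Fin n → ℝ) :
    Matrix (Fin n) (Fin n) ℝ :=
  Matrix.of fun i j => fundT (F x) y i j

/-- Spray coefficients `G^i = ¼ g^{il}(∂g_{jl}/∂x^k + ∂g_{lk}/∂x^j − ∂g_{jk}/∂x^l) y^j y^k`. -/
def sprayF {n : ℕ} (F : (Fin n → ℝ) → (Fin n → ℝ) → ℝ) (x y : Fin n → ℝ) (i : Fin n) : ℝ :=
  (1 / 4) * ∑ l, (gmatF F x y)⁻¹ i l *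
    ∑ j, ∑ k, (pd (fun z => gmatF F z y j l) x k
        + pd (fun z => gmatF F z y l k) x j
        - pd (fun z => gmatF F z y j k) x l) * y j * y k


/-! ### Auxiliary material -/

/-- The open rectangle on which `Ψ` lives. -/
def Rect (b₀ g₀ : ℝ) : Set (ℝ × ℝ) := Set.Ioo (-b₀) b₀ ×ˢ Set.Ioo (-g₀) g₀

/-- Smoothness of a curried function of two variables. -/
def SM (R : Set (ℝ × ℝ)) (G : ℝ → ℝ → ℝ) : Prop :=
  ContDiffOn ℝ (⊤ : ℕ∞) (fun p : ℝ × ℝ => G p.1 p.2) R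

lemma rect_open (b₀ g₀ : ℝ) : IsOpen (Rect b₀ g₀) := isOpen_Ioo.prod isOpen_Ioo

lemma cd_diff {E : Type*} [NormedAddCommGroup E] [NormedSpace ℝ E] {f : E → ℝ} {R : Set E}
    (hR : IsOpen R) (h : ContDiffOn ℝ (⊤ : ℕ∞) f R) {z : E} (hz : z ∈ R) :
    DifferentiableAt ℝ f z :=
  (h.contDiffAt (hR.mem_nhds hz)).differentiableAt (by simp)

lemma cd_fderiv {E : Type*} [NormedAddCommGroup E] [NormedSpace ℝ E] {f : E → ℝ} {R : Set E}
    (hR : IsOpen R) (h : ContDiffOn ℝ (⊤ : ℕ∞) f R) (w : E) :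
    ContDiffOn ℝ (⊤ : ℕ∞) (fun z => fderiv ℝ f z w) R := by
  have h1 : ContDiffOn ℝ (⊤ : ℕ∞) (fderiv ℝ f) R := h.fderiv_of_isOpen hR (by simp)
  exact h1.clm_apply contDiffOn_const

lemma Ds_eq {R : Set (ℝ × ℝ)} (hR : IsOpen R) {G : ℝ → ℝ → ℝ} (h : SM R G) {z : ℝ × ℝ}
    (hz : z ∈ R) : Ds G z.1 z.2 = fderiv ℝ (fun p : ℝ × ℝ => G p.1 p.2) z (1, 0) := by
  have hd := (cd_diff hR h hz).hasFDerivAt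
  have h2 : HasDerivAt (fun u : ℝ => ((u, z.2) : ℝ × ℝ)) (1, 0) z.1 :=
    (hasDerivAt_id _).prodMk (hasDerivAt_const _ _)
  exact (HasFDerivAt.comp_hasDerivAt (f := fun u : ℝ => ((u, z.2) : ℝ × ℝ)) z.1 hd h2).deriv

lemma Dt_eq {R : Set (ℝ × ℝ)} (hR : IsOpen R) {G : ℝ → ℝ → ℝ} (h : SM R G) {z : ℝ × ℝ}
    (hz : z ∈ R) : Dt G z.1 z.2 = fderiv ℝ (fun p : ℝ × ℝ => G p.1 p.2) z (0, 1) := by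
  have hd := (cd_diff hR h hz).hasFDerivAt
  have h2 : HasDerivAt (fun u : ℝ => ((z.1, u) : ℝ × ℝ)) (0, 1) z.2 :=
    (hasDerivAt_const _ _).prodMk (hasDerivAt_id _)
  exact (HasFDerivAt.comp_hasDerivAt (f := fun u : ℝ => ((z.1, u) : ℝ × ℝ)) z.2 hd h2).deriv

lemma SM.ds {R : Set (ℝ × ℝ)} (hR : IsOpen R) {G : ℝ → ℝ → ℝ} (h : SM R G) : SM R (Ds G) :=
  (cd_fderiv hR h (1, 0)).congr fun _ hz => Ds_eq hR h hz

lemma SM.dt {R : Set (ℝ × ℝ)} (hR : IsOpen R) {G : ℝ → ℝ → ℝ} (h : SM R G) : SM R (Dt G) :=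
  (cd_fderiv hR h (0, 1)).congr fun _ hz => Dt_eq hR h hz

lemma SM.chain {R : Set (ℝ × ℝ)} (hR : IsOpen R) {G : ℝ → ℝ → ℝ} (h : SM R G)
    {p q : ℝ → ℝ} {dp dq t : ℝ} (hp : HasDerivAt p dp t) (hq : HasDerivAt q dq t)
    (hz : (p t, q t) ∈ R) :
    HasDerivAt (fun τ => G (p τ) (q τ)) (Ds G (p t) (q t) * dp + Dt G (p t) (q t) * dq) t := by
  have hd := (cd_diff hR h hz).hasFDerivAt
  have h3 := HasFDerivAt.comp_hasDerivAt (f := fun u : ℝ => ((p u, q u) : ℝ × ℝ)) t hd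
    (hp.prodMk hq)
  refine h3.congr_deriv ?_
  have e1 := Ds_eq hR h hz
  have e2 := Dt_eq hR h hz
  simp only at e1 e2
  rw [e1, e2]
  have : ((dp, dq) : ℝ × ℝ) = dp • ((1, 0) : ℝ × ℝ) + dq • ((0, 1) : ℝ × ℝ) := by simp
  rw [this, map_add, map_smul, map_smul, smul_eq_mul, smul_eq_mul]
  ring

lemma SM.symm {R : Set (ℝ × ℝ)} (hR : IsOpen R) {G : ℝ → ℝ → ℝ} (h : SM R G) {p q : ℝ}
    (hz : (p, q) ∈ R) : Ds (Dt G) p q = Dt (Ds G) p q := by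
  have e1 := Ds_eq hR (h.dt hR) hz
  have e2 := Dt_eq hR (h.ds hR) hz
  simp only at e1 e2
  rw [e1, e2]
  have n1 : (fun p : ℝ × ℝ => Dt G p.1 p.2) =ᶠ[nhds (p, q)]
      fun z => fderiv ℝ (fun p : ℝ × ℝ => G p.1 p.2) z (0, 1) :=
    Filter.eventuallyEq_of_mem (hR.mem_nhds hz) fun z hz => Dt_eq hR h hz
  have n2 : (fun p : ℝ × ℝ => Ds G p.1 p.2) =ᶠ[nhds (p, q)]
      fun z => fderiv ℝ (fun p : ℝ × ℝ => G p.1 p.2) z (1, 0) :=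
    Filter.eventuallyEq_of_mem (hR.mem_nhds hz) fun z hz => Ds_eq hR h hz
  rw [n1.fderiv_eq, n2.fderiv_eq]
  have hc : ContDiffAt ℝ (⊤ : ℕ∞) (fun p : ℝ × ℝ => G p.1 p.2) (p, q) :=
    ContDiffOn.contDiffAt h (hR.mem_nhds hz)
  have hs : IsSymmSndFDerivAt ℝ (fun p : ℝ × ℝ => G p.1 p.2) (p, q) :=
    hc.isSymmSndFDerivAt (by
      simp only [minSmoothness_of_isRCLikeNormedField]
      exact WithTop.coe_le_coe.2 (le_top (a := (2 : ℕ∞))))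
  have hdd : DifferentiableAt ℝ (fderiv ℝ (fun p : ℝ × ℝ => G p.1 p.2)) (p, q) :=
    (hc.fderiv_right (m := 1) (by norm_cast)).differentiableAt (by simp)
  have k : ∀ w v : ℝ × ℝ, fderiv ℝ (fun z => fderiv ℝ (fun p : ℝ × ℝ => G p.1 p.2) z w) (p, q) v
      = fderiv ℝ (fderiv ℝ (fun p : ℝ × ℝ => G p.1 p.2)) (p, q) v w := by
    intro w v
    rw [fderiv_clm_apply hdd (differentiableAt_const _)]
    simp
  rw [k, k]
  exact hs _ _

/-! Hypotheses, bundled. -/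

structure Hyp {n : ℕ} (U : Set (Fin n → ℝ)) (a : (Fin n → ℝ) → Matrix (Fin n) (Fin n) ℝ)
    (bv gv : (Fin n → ℝ) → Fin n → ℝ) (b₀ g₀ : ℝ) (Ψ : ℝ → ℝ → ℝ) : Prop where
  hU : IsOpen U
  haS : ∀ i j, ContDiffOn ℝ (⊤ : ℕ∞) (fun x => a x i j) U
  haP : ∀ x ∈ U, (a x).PosDef
  hbS : ∀ i, ContDiffOn ℝ (⊤ : ℕ∞) (fun x => bv x i) U
  hgS : ∀ i, ContDiffOn ℝ (⊤ : ℕ∞) (fun x => gv x i) U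
  hb : ∀ x ∈ U, Real.sqrt (quadInv (a x) (bv x) (bv x)) < b₀
  hg : ∀ x ∈ U, Real.sqrt (quadInv (a x) (gv x) (gv x)) < g₀
  hΨ : SM (Rect b₀ g₀) Ψ

/-- The slit tangent bundle over `U`. -/
def Om {n : ℕ} (U : Set (Fin n → ℝ)) : Set ((Fin n → ℝ) × (Fin n → ℝ)) :=
  {z | z.1 ∈ U ∧ z.2 ≠ 0}

lemma om_open {n : ℕ} {U : Set (Fin n → ℝ)} (hU : IsOpen U) : IsOpen (Om U) :=
  (hU.preimage continuous_fst).inter (isOpen_ne.preimage continuous_snd)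

/-- `y_i = a_{ij} y^j`. -/
def lowr {n : ℕ} (a : Matrix (Fin n) (Fin n) ℝ) (y : Fin n → ℝ) (i : Fin n) : ℝ :=
  ∑ j, a i j * y j

lemma sum_low {n : ℕ} (a : Matrix (Fin n) (Fin n) ℝ) (y w : Fin n → ℝ) :
    ∑ i, ∑ j, a i j * w i * y j = ∑ i, w i * lowr a y i := by
  simp only [lowr, Finset.mul_sum]
  exact Finset.sum_congr rfl fun i _ => Finset.sum_congr rfl fun j _ => by ring

lemma pd_symm_a {n : ℕ} {a : Matrix (Fin n) (Fin n) ℝ} (h : a.PosDef) (i j : Fin n) :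
    a i j = a j i := by
  have := h.isHermitian.apply i j
  simpa using this.symm

lemma quad_pos {n : ℕ} {a : Matrix (Fin n) (Fin n) ℝ} (h : a.PosDef) {y : Fin n → ℝ}
    (hy : y ≠ 0) : 0 < ∑ i, ∑ j, a i j * y i * y j := by
  have h2 := h.dotProduct_mulVec_pos hy
  rw [sum_low]
  simpa [dotProduct, Matrix.mulVec, lowr] using h2

lemma quad_nonneg {n : ℕ} {a : Matrix (Fin n) (Fin n) ℝ} (h : a.PosDef) (y : Fin n → ℝ) :
     0 ≤ ∑ i, y i * lowr a y i := by
  by_cases hy : y = 0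
  · simp [hy]
  · rw [← sum_low]; exact (quad_pos h hy).le

lemma alph_pos {n : ℕ} {a : Matrix (Fin n) (Fin n) ℝ} (h : a.PosDef) {y : Fin n → ℝ}
    (hy : y ≠ 0) : 0 < alph a y := Real.sqrt_pos.2 (quad_pos h hy)

lemma alph_sq {n : ℕ} {a : Matrix (Fin n) (Fin n) ℝ} (h : a.PosDef) {y : Fin n → ℝ}
    (hy : y ≠ 0) : alph a y ^ 2 = ∑ i, y i * lowr a y i := by
  rw [alph, Real.sq_sqrt (quad_pos h hy).le, sum_low]

/-- raising an index -/
def rais {n : ℕ} (a : Matrix (Fin n) (Fin n) ℝ) (u : Fin n → ℝ) (i : Fin n) : ℝ :=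
  ∑ j, a⁻¹ i j * u j

lemma lowr_rais {n : ℕ} {a : Matrix (Fin n) (Fin n) ℝ} (h : a.PosDef) (u : Fin n → ℝ) (i : Fin n) :
    lowr a (rais a u) i = u i := by
  have h1 : a.mulVec (a⁻¹.mulVec u) = u := by
    rw [Matrix.mulVec_mulVec, Matrix.mul_nonsing_inv _ h.det_pos.ne'.isUnit, Matrix.one_mulVec]
  exact congrFun h1 i

lemma lowr_symm {n : ℕ} {a : Matrix (Fin n) (Fin n) ℝ} (h : a.PosDef) (u v : Fin n → ℝ) :
    ∑ i, u i * lowr a v i = ∑ i, v i * lowr a u i := by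
  rw [← sum_low, ← sum_low, Finset.sum_comm]
  refine Finset.sum_congr rfl fun i _ => Finset.sum_congr rfl fun j _ => ?_
  rw [pd_symm_a h i j]; ring

lemma quadInv_eq {n : ℕ} (a : Matrix (Fin n) (Fin n) ℝ) (u v : Fin n → ℝ) :
    quadInv a u v = ∑ i, u i * rais a v i := by
  simp only [quadInv, rais, Finset.mul_sum]
  exact Finset.sum_congr rfl fun i _ => Finset.sum_congr rfl fun j _ => by ring

lemma lowr_add {n : ℕ} (a : Matrix (Fin n) (Fin n) ℝ) (u v : Fin n → ℝ) (c : ℝ) (i : Fin n) :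
    lowr a (fun k => u k - c * v k) i = lowr a u i - c * lowr a v i := by
  simp only [lowr, Finset.mul_sum, ← Finset.sum_sub_distrib]
  exact Finset.sum_congr rfl fun i _ => by ring

lemma cauchy {n : ℕ} {a : Matrix (Fin n) (Fin n) ℝ} (h : a.PosDef) {y : Fin n → ℝ}
    (hy : y ≠ 0) (v : Fin n → ℝ) : sVar a v y ^ 2 ≤ quadInv a v v := by
  have hα := alph_pos h hy
  have h1 := alph_sq h hy
  set c := oneForm v y / alph a y ^ 2 with hc
  have h0 := quad_nonneg h (fun k => rais a v k - c * y k)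
  simp only [lowr_add, lowr_rais h] at h0
  have e : ∑ i, (rais a v i - c * y i) * (v i - c * lowr a y i)
      = ∑ i, v i * rais a v i - c * oneForm v y - c * (∑ i, rais a v i * lowr a y i)
        + c ^ 2 * ∑ i, y i * lowr a y i := by
    simp only [oneForm, Finset.mul_sum, ← Finset.sum_sub_distrib, ← Finset.sum_add_distrib]
    exact Finset.sum_congr rfl fun i _ => by ring
  have e2 : ∑ i, rais a v i * lowr a y i = oneForm v y := by
    rw [lowr_symm h]; simp only [lowr_rais h, oneForm]
    exact Finset.sum_congr rfl fun i _ => by ring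
  rw [e, e2, ← quadInv_eq, ← h1] at h0
  have : sVar a v y ^ 2 = 2 * (c * oneForm v y) - c ^ 2 * alph a y ^ 2 := by
    rw [hc, sVar]; field_simp; ring
  linarith

lemma sVar_mem {n : ℕ} {a : Matrix (Fin n) (Fin n) ℝ} (h : a.PosDef) {y : Fin n → ℝ}
    (hy : y ≠ 0) (v : Fin n → ℝ) {b₀ : ℝ} (hb : Real.sqrt (quadInv a v v) < b₀) :
    sVar a v y ∈ Set.Ioo (-b₀) b₀ := by
  have h1 := Real.abs_le_sqrt (cauchy h hy v)
  exact abs_lt.1 (h1.trans_lt hb)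

/-! ### Smoothness on the slit tangent bundle -/

lemma cd_fst {n : ℕ} {U : Set (Fin n → ℝ)} {f : (Fin n → ℝ) → ℝ}
    (h : ContDiffOn ℝ (⊤ : ℕ∞) f U) :
    ContDiffOn ℝ (⊤ : ℕ∞) (fun z : (Fin n → ℝ) × (Fin n → ℝ) => f z.1) (Om U) :=
  h.comp contDiff_fst.contDiffOn fun _ hz => hz.1

lemma cd_snd {n : ℕ} {U : Set (Fin n → ℝ)} (i : Fin n) :
    ContDiffOn ℝ (⊤ : ℕ∞) (fun z : (Fin n → ℝ) × (Fin n → ℝ) => z.2 i) (Om U) :=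
  ((contDiff_apply ℝ ℝ i).comp contDiff_snd).contDiffOn

section
variable {n : ℕ} {U : Set (Fin n → ℝ)} {a : (Fin n → ℝ) → Matrix (Fin n) (Fin n) ℝ}
  {bv gv : (Fin n → ℝ) → Fin n → ℝ} {b₀ g₀ : ℝ} {Ψ : ℝ → ℝ → ℝ}

lemma Hyp.mem (H : Hyp U a bv gv b₀ g₀ Ψ) {x y : Fin n → ℝ} (hx : x ∈ U) (hy : y ≠ 0) :
    (sVar (a x) (bv x) y, sVar (a x) (gv x) y) ∈ Rect b₀ g₀ :=
  ⟨sVar_mem (H.haP x hx) hy _ (H.hb x hx), sVar_mem (H.haP x hx) hy _ (H.hg x hx)⟩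

lemma Hyp.cd_al (H : Hyp U a bv gv b₀ g₀ Ψ) :
    ContDiffOn ℝ (⊤ : ℕ∞) (fun z : (Fin n → ℝ) × (Fin n → ℝ) => alph (a z.1) z.2) (Om U) := by
  refine ContDiffOn.sqrt ?_ fun z hz => (quad_pos (H.haP _ hz.1) hz.2).ne'
  exact ContDiffOn.sum fun i _ => ContDiffOn.sum fun j _ =>
    ((cd_fst (H.haS i j)).mul (cd_snd i)).mul (cd_snd j)

lemma Hyp.cd_s (H : Hyp U a bv gv b₀ g₀ Ψ) {v : (Fin n → ℝ) → Fin n → ℝ}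
    (hv : ∀ i, ContDiffOn ℝ (⊤ : ℕ∞) (fun x => v x i) U) :
    ContDiffOn ℝ (⊤ : ℕ∞) (fun z : (Fin n → ℝ) × (Fin n → ℝ) => sVar (a z.1) (v z.1) z.2)
      (Om U) := by
  refine ContDiffOn.div ?_ H.cd_al fun z hz => (alph_pos (H.haP _ hz.1) hz.2).ne'
  exact ContDiffOn.sum fun i _ => (cd_fst (hv i)).mul (cd_snd i)

lemma Hyp.cd_G (H : Hyp U a bv gv b₀ g₀ Ψ) {G : ℝ → ℝ → ℝ} (hG : SM (Rect b₀ g₀) G) :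
    ContDiffOn ℝ (⊤ : ℕ∞) (fun z : (Fin n → ℝ) × (Fin n → ℝ) =>
      G (sVar (a z.1) (bv z.1) z.2) (sVar (a z.1) (gv z.1) z.2)) (Om U) :=
  ContDiffOn.comp (g := fun p : ℝ × ℝ => G p.1 p.2) hG
    ((H.cd_s H.hbS).prodMk (H.cd_s H.hgS)) fun _ hz => H.mem hz.1 hz.2

/-- The metric on the tangent bundle. -/
def FF (a : (Fin n → ℝ) → Matrix (Fin n) (Fin n) ℝ) (bv gv : (Fin n → ℝ) → Fin n → ℝ)
    (Ψ : ℝ → ℝ → ℝ) (z : (Fin n → ℝ) × (Fin n → ℝ)) : ℝ :=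
  Fm (a z.1) (bv z.1) (gv z.1) Ψ z.2

/-- The explicit first derivative of the metric. -/
def Fi (a : (Fin n → ℝ) → Matrix (Fin n) (Fin n) ℝ) (bv gv : (Fin n → ℝ) → Fin n → ℝ)
    (Ψ : ℝ → ℝ → ℝ) (i : Fin n) (z : (Fin n → ℝ) × (Fin n → ℝ)) : ℝ :=
  lowr (a z.1) z.2 i / alph (a z.1) z.2
      * PiF Ψ (sVar (a z.1) (bv z.1) z.2) (sVar (a z.1) (gv z.1) z.2)
    + Ds Ψ (sVar (a z.1) (bv z.1) z.2) (sVar (a z.1) (gv z.1) z.2) * bv z.1 i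
    + Dt Ψ (sVar (a z.1) (bv z.1) z.2) (sVar (a z.1) (gv z.1) z.2) * gv z.1 i

lemma SM.pi {R : Set (ℝ × ℝ)} (hR : IsOpen R) (h : SM R Ψ) : SM R (PiF Ψ) :=
  (ContDiffOn.sub h (contDiff_fst.contDiffOn.mul (h.ds hR))).sub
    (contDiff_snd.contDiffOn.mul (h.dt hR))

lemma Hyp.cd_F (H : Hyp U a bv gv b₀ g₀ Ψ) : ContDiffOn ℝ (⊤ : ℕ∞) (FF a bv gv Ψ) (Om U) :=
  H.cd_al.mul (H.cd_G H.hΨ)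

lemma Hyp.cd_Fi (H : Hyp U a bv gv b₀ g₀ Ψ) (i : Fin n) :
    ContDiffOn ℝ (⊤ : ℕ∞) (Fi a bv gv Ψ i) (Om U) := by
  have hR := rect_open b₀ g₀
  refine ((ContDiffOn.mul (ContDiffOn.div ?_ H.cd_al
    fun z hz => (alph_pos (H.haP _ hz.1) hz.2).ne') (H.cd_G (H.hΨ.pi hR))).add
    ((H.cd_G (H.hΨ.ds hR)).mul (cd_fst (H.hbS i)))).add
    ((H.cd_G (H.hΨ.dt hR)).mul (cd_fst (H.hgS i)))
  exact ContDiffOn.sum fun j _ => (cd_fst (H.haS i j)).mul (cd_snd j)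

/-! ### Derivatives along curves -/

/-- derivative of `α` in direction `(u,v)` -/
def dal (a : (Fin n → ℝ) → Matrix (Fin n) (Fin n) ℝ) (x y u v : Fin n → ℝ) : ℝ :=
  (∑ i, ∑ j, fderiv ℝ (fun z => a z i j) x u * y i * y j) / (2 * alph (a x) y)
    + (∑ i, v i * lowr (a x) y i) / alph (a x) y

/-- derivative of `y_i` in direction `(u,v)` -/
def dlow (a : (Fin n → ℝ) → Matrix (Fin n) (Fin n) ℝ) (x y u v : Fin n → ℝ) (i : Fin n) : ℝ :=
  ∑ j, (fderiv ℝ (fun z => a z i j) x u * y j + a x i j * v j)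

/-- derivative of a one-form in direction `(u,v)` -/
def dbe (b : (Fin n → ℝ) → Fin n → ℝ) (x y u v : Fin n → ℝ) : ℝ :=
  ∑ i, (fderiv ℝ (fun z => b z i) x u * y i + b x i * v i)

/-- derivative of `s` in direction `(u,v)` -/
def dsv (a : (Fin n → ℝ) → Matrix (Fin n) (Fin n) ℝ)
    (b : (Fin n → ℝ) → Fin n → ℝ) (x y u v : Fin n → ℝ) : ℝ :=
  (dbe b x y u v - sVar (a x) (b x) y * dal a x y u v) / alph (a x) y

variable {X Y : ℝ → Fin n → ℝ} {u v : Fin n → ℝ} {t : ℝ}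

lemma c_fst (hU : IsOpen U) {f : (Fin n → ℝ) → ℝ} (h : ContDiffOn ℝ (⊤ : ℕ∞) f U)
    (hX : HasDerivAt X u t) (hx : X t ∈ U) :
    HasDerivAt (fun τ => f (X τ)) (fderiv ℝ f (X t) u) t :=
  (cd_diff hU h hx).hasFDerivAt.comp_hasDerivAt t hX

lemma c_snd (hY : HasDerivAt Y v t) (i : Fin n) : HasDerivAt (fun τ => Y τ i) (v i) t :=
  hasDerivAt_pi.1 hY i

lemma Hyp.c_al (H : Hyp U a bv gv b₀ g₀ Ψ) (hX : HasDerivAt X u t) (hY : HasDerivAt Y v t)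
    (hx : X t ∈ U) (hy : Y t ≠ 0) :
    HasDerivAt (fun τ => alph (a (X τ)) (Y τ)) (dal a (X t) (Y t) u v) t := by
  have hα := alph_pos (H.haP _ hx) hy
  have h1 : HasDerivAt (fun τ => ∑ i, ∑ j, a (X τ) i j * Y τ i * Y τ j)
      (∑ i, ∑ j, ((fderiv ℝ (fun z => a z i j) (X t) u * Y t i + a (X t) i j * v i) * Y t j
        + a (X t) i j * Y t i * v j)) t :=
    HasDerivAt.fun_sum fun i _ => HasDerivAt.fun_sum fun j _ =>
      ((c_fst H.hU (H.haS i j) hX hx).mul (c_snd hY i)).mul (c_snd hY j)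
  have h2 := h1.sqrt (quad_pos (H.haP _ hx) hy).ne'
  refine h2.congr_deriv ?_
  change _ / (2 * alph (a (X t)) (Y t)) = _
  have e : ∑ i, ∑ j, ((fderiv ℝ (fun z => a z i j) (X t) u * Y t i + a (X t) i j * v i) * Y t j
        + a (X t) i j * Y t i * v j) =
      (∑ i, ∑ j, fderiv ℝ (fun z => a z i j) (X t) u * Y t i * Y t j)
      + (∑ i, ∑ j, a (X t) i j * v i * Y t j) + ∑ i, ∑ j, a (X t) i j * Y t i * v j := by
    simp only [← Finset.sum_add_distrib]
    exact Finset.sum_congr rfl fun i _ => Finset.sum_congr rfl fun j _ => by ring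
  rw [e, sum_low, sum_low, lowr_symm (H.haP _ hx) (Y t) v, dal]
  field_simp
  ring

lemma Hyp.c_low (H : Hyp U a bv gv b₀ g₀ Ψ) (hX : HasDerivAt X u t) (hY : HasDerivAt Y v t)
    (hx : X t ∈ U) (i : Fin n) :
    HasDerivAt (fun τ => lowr (a (X τ)) (Y τ) i) (dlow a (X t) (Y t) u v i) t :=
  HasDerivAt.fun_sum fun j _ => (c_fst H.hU (H.haS i j) hX hx).mul (c_snd hY j)

lemma c_be (hU : IsOpen U) {b : (Fin n → ℝ) → Fin n → ℝ}
    (hb : ∀ i, ContDiffOn ℝ (⊤ : ℕ∞) (fun x => b x i) U) (hX : HasDerivAt X u t)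
    (hY : HasDerivAt Y v t) (hx : X t ∈ U) :
    HasDerivAt (fun τ => oneForm (b (X τ)) (Y τ)) (dbe b (X t) (Y t) u v) t :=
  HasDerivAt.fun_sum fun j _ => (c_fst hU (hb j) hX hx).mul (c_snd hY j)

lemma Hyp.c_s (H : Hyp U a bv gv b₀ g₀ Ψ) {b : (Fin n → ℝ) → Fin n → ℝ}
    (hb : ∀ i, ContDiffOn ℝ (⊤ : ℕ∞) (fun x => b x i) U) (hX : HasDerivAt X u t)
    (hY : HasDerivAt Y v t) (hx : X t ∈ U) (hy : Y t ≠ 0) :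
    HasDerivAt (fun τ => sVar (a (X τ)) (b (X τ)) (Y τ)) (dsv a b (X t) (Y t) u v) t := by
  have hα := alph_pos (H.haP _ hx) hy
  refine ((c_be H.hU hb hX hY hx).div (H.c_al hX hY hx hy) hα.ne').congr_deriv ?_
  rw [dsv, sVar]
  field_simp

lemma Hyp.c_G (H : Hyp U a bv gv b₀ g₀ Ψ) {G : ℝ → ℝ → ℝ} (hG : SM (Rect b₀ g₀) G)
    (hX : HasDerivAt X u t)
    (hY : HasDerivAt Y v t) (hx : X t ∈ U) (hy : Y t ≠ 0) :
    HasDerivAt (fun τ => G (sVar (a (X τ)) (bv (X τ)) (Y τ)) (sVar (a (X τ)) (gv (X τ)) (Y τ)))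
      (Ds G (sVar (a (X t)) (bv (X t)) (Y t)) (sVar (a (X t)) (gv (X t)) (Y t))
          * dsv a bv (X t) (Y t) u v
        + Dt G (sVar (a (X t)) (bv (X t)) (Y t)) (sVar (a (X t)) (gv (X t)) (Y t))
          * dsv a gv (X t) (Y t) u v) t :=
  hG.chain (rect_open b₀ g₀) (H.c_s H.hbS hX hY hx hy) (H.c_s H.hgS hX hY hx hy) (H.mem hx hy)

/-- derivative of `F` in direction `(u,v)` -/
def dF (a : (Fin n → ℝ) → Matrix (Fin n) (Fin n) ℝ) (bv gv : (Fin n → ℝ) → Fin n → ℝ)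
    (Ψ : ℝ → ℝ → ℝ) (x y u v : Fin n → ℝ) : ℝ :=
  dal a x y u v * PiF Ψ (sVar (a x) (bv x) y) (sVar (a x) (gv x) y)
    + Ds Ψ (sVar (a x) (bv x) y) (sVar (a x) (gv x) y) * dbe bv x y u v
    + Dt Ψ (sVar (a x) (bv x) y) (sVar (a x) (gv x) y) * dbe gv x y u v

lemma Hyp.c_F (H : Hyp U a bv gv b₀ g₀ Ψ) (hX : HasDerivAt X u t)
    (hY : HasDerivAt Y v t) (hx : X t ∈ U) (hy : Y t ≠ 0) :
    HasDerivAt (fun τ => FF a bv gv Ψ (X τ, Y τ)) (dF a bv gv Ψ (X t) (Y t) u v) t := by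
  have hα := alph_pos (H.haP _ hx) hy
  refine ((H.c_al hX hY hx hy).mul (H.c_G H.hΨ hX hY hx hy)).congr_deriv ?_
  rw [dF, dsv, dsv, PiF]
  field_simp
  ring

/-- `h_i` in explicit form -/
def hx (a : Matrix (Fin n) (Fin n) ℝ) (b y : Fin n → ℝ) (i : Fin n) : ℝ :=
  b i - sVar a b y * (lowr a y i / alph a y)

/-- derivative of `F_i` in direction `(u,v)` -/
def dFi (a : (Fin n → ℝ) → Matrix (Fin n) (Fin n) ℝ) (bv gv : (Fin n → ℝ) → Fin n → ℝ)
    (Ψ : ℝ → ℝ → ℝ) (i : Fin n) (x y u v : Fin n → ℝ) (p q : ℝ) : ℝ :=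
  (dlow a x y u v i - lowr (a x) y i / alph (a x) y * dal a x y u v) / alph (a x) y * PiF Ψ p q
    + (Ds (Ds Ψ) p q * dsv a bv x y u v + Dt (Ds Ψ) p q * dsv a gv x y u v) * hx (a x) (bv x) y i
    + (Dt (Ds Ψ) p q * dsv a bv x y u v + Dt (Dt Ψ) p q * dsv a gv x y u v) * hx (a x) (gv x) y i
    + Ds Ψ p q * fderiv ℝ (fun z => bv z i) x u + Dt Ψ p q * fderiv ℝ (fun z => gv z i) x u

lemma Hyp.c_Fi (H : Hyp U a bv gv b₀ g₀ Ψ) (i : Fin n) (hX : HasDerivAt X u t)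
    (hY : HasDerivAt Y v t) (hx : X t ∈ U) (hy : Y t ≠ 0) :
    HasDerivAt (fun τ => Fi a bv gv Ψ i (X τ, Y τ)) (dFi a bv gv Ψ i (X t) (Y t) u v
      (sVar (a (X t)) (bv (X t)) (Y t)) (sVar (a (X t)) (gv (X t)) (Y t))) t := by
  have hα := alph_pos (H.haP _ hx) hy
  have hR := rect_open b₀ g₀
  have hs := H.c_s H.hbS hX hY hx hy
  have ht := H.c_s H.hgS hX hY hx hy
  have h0 := H.c_G H.hΨ hX hY hx hy
  have h1 := H.c_G (H.hΨ.ds hR) hX hY hx hy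
  have h2 := H.c_G (H.hΨ.dt hR) hX hY hx hy
  rw [H.hΨ.symm hR (H.mem hx hy)] at h2
  have hP := (h0.sub (hs.mul h1)).sub (ht.mul h2)
  have := ((((H.c_low hX hY hx i).div (H.c_al hX hY hx hy) hα.ne').mul hP).add
    (h1.mul (c_fst H.hU (H.hbS i) hX hx))).add (h2.mul (c_fst H.hU (H.hgS i) hX hx))
  refine this.congr_deriv ?_
  simp only [Pi.sub_apply, Pi.mul_apply, Pi.div_apply]
  rw [dFi, _root_.hx, _root_.hx, PiF]
  generalize dsv a bv (X t) (Y t) u v = d1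
  generalize dsv a gv (X t) (Y t) u v = d2
  field_simp
  ring

lemma fd_eq {f : (Fin n → ℝ) × (Fin n → ℝ) → ℝ} (hU : IsOpen U)
    (h : ContDiffOn ℝ (⊤ : ℕ∞) f (Om U)) {x y u v : Fin n → ℝ} (hx : x ∈ U) (hy : y ≠ 0) {c : ℝ}
    (hc : HasDerivAt (fun τ : ℝ => f (x + τ • u, y + τ • v)) c 0) :
    fderiv ℝ f (x, y) (u, v) = c := by
  have hd := (cd_diff (om_open hU) h (z := (x, y)) ⟨hx, hy⟩).hasFDerivAt
  have hX : HasDerivAt (fun τ : ℝ => x + τ • u) u 0 := by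
    simpa using ((hasDerivAt_id (0 : ℝ)).smul_const u).const_add x
  have hY : HasDerivAt (fun τ : ℝ => y + τ • v) v 0 := by
    simpa using ((hasDerivAt_id (0 : ℝ)).smul_const v).const_add y
  have h3 := HasFDerivAt.comp_hasDerivAt_of_eq (f := fun τ : ℝ => (x + τ • u, y + τ • v)) 0 hd
    (hX.prodMk hY) (by simp)
  exact h3.unique hc

lemma Hyp.fd_al (H : Hyp U a bv gv b₀ g₀ Ψ) {x y : Fin n → ℝ} (u v : Fin n → ℝ) (hx : x ∈ U)
    (hy : y ≠ 0) :
    fderiv ℝ (fun z : (Fin n → ℝ) × (Fin n → ℝ) => alph (a z.1) z.2) (x, y) (u, v)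
      = dal a x y u v := by
  refine fd_eq H.hU H.cd_al hx hy ?_
  have hX : HasDerivAt (fun τ : ℝ => x + τ • u) u 0 := by
    simpa using ((hasDerivAt_id (0 : ℝ)).smul_const u).const_add x
  have hY : HasDerivAt (fun τ : ℝ => y + τ • v) v 0 := by
    simpa using ((hasDerivAt_id (0 : ℝ)).smul_const v).const_add y
  have := H.c_al hX hY (by simpa using hx) (by simpa using hy)
  simpa only [zero_smul, add_zero] using this

lemma Hyp.fd_F (H : Hyp U a bv gv b₀ g₀ Ψ) {x y : Fin n → ℝ} (u v : Fin n → ℝ) (hx : x ∈ U)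
    (hy : y ≠ 0) :
    fderiv ℝ (FF a bv gv Ψ) (x, y) (u, v) = dF a bv gv Ψ x y u v := by
  refine fd_eq H.hU H.cd_F hx hy ?_
  have hX : HasDerivAt (fun τ : ℝ => x + τ • u) u 0 := by
    simpa using ((hasDerivAt_id (0 : ℝ)).smul_const u).const_add x
  have hY : HasDerivAt (fun τ : ℝ => y + τ • v) v 0 := by
    simpa using ((hasDerivAt_id (0 : ℝ)).smul_const v).const_add y
  have := H.c_F hX hY (by simpa using hx) (by simpa using hy)
  simpa only [zero_smul, add_zero] using this

lemma Hyp.fd_Fi (H : Hyp U a bv gv b₀ g₀ Ψ) (i : Fin n) {x y : Fin n → ℝ} (u v : Fin n → ℝ)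
    (hx : x ∈ U) (hy : y ≠ 0) :
    fderiv ℝ (Fi a bv gv Ψ i) (x, y) (u, v) = dFi a bv gv Ψ i x y u v
      (sVar (a x) (bv x) y) (sVar (a x) (gv x) y) := by
  refine fd_eq H.hU (H.cd_Fi i) hx hy ?_
  have hX : HasDerivAt (fun τ : ℝ => x + τ • u) u 0 := by
    simpa using ((hasDerivAt_id (0 : ℝ)).smul_const u).const_add x
  have hY : HasDerivAt (fun τ : ℝ => y + τ • v) v 0 := by
    simpa using ((hasDerivAt_id (0 : ℝ)).smul_const v).const_add y
  have := H.c_Fi i hX hY (by simpa using hx) (by simpa using hy)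
  simpa only [zero_smul, add_zero] using this

/-! ### Partial derivatives -/

lemma fd_sum (f : (Fin n → ℝ) → ℝ) (x u : Fin n → ℝ) :
    fderiv ℝ f x u = ∑ k, u k * pd f x k := by
  conv_lhs => rw [← Finset.univ_sum_single u]
  rw [map_sum]
  refine Finset.sum_congr rfl fun k _ => ?_
  have : (Pi.single k (u k) : Fin n → ℝ) = u k • Pi.single k (1 : ℝ) := by
    rw [← Pi.single_smul]; simp
  rw [this, map_smul, smul_eq_mul, pd]

lemma fd_sum1 (L : (Fin n → ℝ) × (Fin n → ℝ) →L[ℝ] ℝ) (u : Fin n → ℝ) :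
    ∑ k, u k * L (Pi.single k 1, 0) = L (u, 0) := by
  have h : ∀ w : Fin n → ℝ, L (w, 0) = (L.comp (ContinuousLinearMap.inl ℝ _ _)) w := fun w => by simp
  simp only [h]
  conv_rhs => rw [← Finset.univ_sum_single u]
  rw [map_sum]
  refine Finset.sum_congr rfl fun k _ => ?_
  have : (Pi.single k (u k) : Fin n → ℝ) = u k • Pi.single k (1 : ℝ) := by
    rw [← Pi.single_smul]; simp
  rw [this, map_smul, smul_eq_mul]

lemma fd_sum2 (L : (Fin n → ℝ) × (Fin n → ℝ) →L[ℝ] ℝ) (u : Fin n → ℝ) :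
    ∑ k, u k * L (0, Pi.single k 1) = L (0, u) := by
  have h : ∀ w : Fin n → ℝ, L (0, w) = (L.comp (ContinuousLinearMap.inr ℝ _ _)) w := fun w => by simp
  simp only [h]
  conv_rhs => rw [← Finset.univ_sum_single u]
  rw [map_sum]
  refine Finset.sum_congr rfl fun k _ => ?_
  have : (Pi.single k (u k) : Fin n → ℝ) = u k • Pi.single k (1 : ℝ) := by
    rw [← Pi.single_smul]; simp
  rw [this, map_smul, smul_eq_mul]

lemma pdy_eq {f : (Fin n → ℝ) × (Fin n → ℝ) → ℝ} {x y : Fin n → ℝ}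
    (h : DifferentiableAt ℝ f (x, y)) (i : Fin n) :
    pd (fun w => f (x, w)) y i = fderiv ℝ f (x, y) (0, Pi.single i 1) := by
  have := HasFDerivAt.comp (f := fun w : Fin n → ℝ => (x, w)) y h.hasFDerivAt
    (hasFDerivAt_prodMk_right x y)
  rw [pd]
  exact congrArg (fun L => L (Pi.single i 1)) this.fderiv

lemma pdx_eq {f : (Fin n → ℝ) × (Fin n → ℝ) → ℝ} {x y : Fin n → ℝ}
    (h : DifferentiableAt ℝ f (x, y)) (i : Fin n) :
    pd (fun w => f (w, y)) x i = fderiv ℝ f (x, y) (Pi.single i 1, 0) := by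
  have := HasFDerivAt.comp (f := fun w : Fin n → ℝ => (w, y)) x h.hasFDerivAt
    (hasFDerivAt_prodMk_left x y)
  rw [pd]
  exact congrArg (fun L => L (Pi.single i 1)) this.fderiv

lemma pd_congr_ne {f g : (Fin n → ℝ) → ℝ} {y : Fin n → ℝ} (hy : y ≠ 0)
    (h : ∀ w, w ≠ 0 → f w = g w) (i : Fin n) : pd f y i = pd g y i := by
  have : f =ᶠ[nhds y] g := Filter.eventuallyEq_of_mem (isOpen_ne.mem_nhds hy) fun w hw => h w hw
  rw [pd, pd, this.fderiv_eq]

lemma pd_congr_U {f g : (Fin n → ℝ) → ℝ} {x : Fin n → ℝ} (hU : IsOpen U) (hx : x ∈ U)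
    (h : ∀ w ∈ U, f w = g w) (i : Fin n) : pd f x i = pd g x i := by
  have : f =ᶠ[nhds x] g := Filter.eventuallyEq_of_mem (hU.mem_nhds hx) fun w hw => h w hw
  rw [pd, pd, this.fderiv_eq]

lemma fd_lin (hU : IsOpen U) {f : Fin n → (Fin n → ℝ) × (Fin n → ℝ) → ℝ}
    {g : (Fin n → ℝ) × (Fin n → ℝ) → ℝ} {x y : Fin n → ℝ} (hx : x ∈ U) (hy : y ≠ 0)
    (hf : ∀ i, ContDiffOn ℝ (⊤ : ℕ∞) (f i) (Om U)) (hg : ContDiffOn ℝ (⊤ : ℕ∞) g (Om U))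
    (c : Fin n → ℝ) (h : ∀ z ∈ U, ∑ i, c i * f i (z, y) = g (z, y)) (u : Fin n → ℝ) :
    ∑ i, c i * fderiv ℝ (f i) (x, y) (u, 0) = fderiv ℝ g (x, y) (u, 0) := by
  have ho := om_open hU
  have hm : (x, y) ∈ Om U := ⟨hx, hy⟩
  have h1 := fun i => HasFDerivAt.comp (f := fun w : Fin n → ℝ => (w, y)) x
    (cd_diff ho (hf i) hm).hasFDerivAt (hasFDerivAt_prodMk_left x y)
  have h2 := HasFDerivAt.comp (f := fun w : Fin n → ℝ => (w, y)) x
    (cd_diff ho hg hm).hasFDerivAt (hasFDerivAt_prodMk_left x y)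
  have h3 : HasFDerivAt (fun z => ∑ i, c i * f i (z, y)) _ x :=
    HasFDerivAt.fun_sum (u := Finset.univ) fun i _ => (h1 i).const_mul (c i)
  have h4 : (fun z => g (z, y)) =ᶠ[nhds x] (fun z => ∑ i, c i * f i (z, y)) :=
    Filter.eventuallyEq_of_mem (hU.mem_nhds hx) fun w hw => (h w hw).symm
  have h5 := (h3.congr_of_eventuallyEq h4).unique h2
  have h6 := congrArg (fun L => L u) h5
  simpa using h6

/-- explicit Hessian of `F` -/
def Fij (a : Matrix (Fin n) (Fin n) ℝ) (b g : Fin n → ℝ)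
    (Ψ : ℝ → ℝ → ℝ) (y : Fin n → ℝ) (p q : ℝ) (i j : Fin n) : ℝ :=
  ((a i j - lowr a y i / alph a y * (lowr a y j / alph a y)) * PiF Ψ p q
    + (Ds (Ds Ψ) p q * hx a b y j + Dt (Ds Ψ) p q * hx a g y j) * hx a b y i
    + (Dt (Ds Ψ) p q * hx a b y j + Dt (Dt Ψ) p q * hx a g y j) * hx a g y i) / alph a y

lemma dal_y (x y : Fin n → ℝ) (j : Fin n) :
    dal a x y 0 (Pi.single j 1) = lowr (a x) y j / alph (a x) y := by
  simp [dal, Pi.single_apply]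

lemma dbe_y (b : (Fin n → ℝ) → Fin n → ℝ) (x y : Fin n → ℝ) (j : Fin n) :
    dbe b x y 0 (Pi.single j 1) = b x j := by
  simp [dbe, Pi.single_apply]

lemma dsv_y (b : (Fin n → ℝ) → Fin n → ℝ) (x y : Fin n → ℝ) (j : Fin n) :
    dsv a b x y 0 (Pi.single j 1) = hx (a x) (b x) y j / alph (a x) y := by
  rw [dsv, dal_y, dbe_y, hx]

lemma Hyp.fdy_F (H : Hyp U a bv gv b₀ g₀ Ψ) {x y : Fin n → ℝ} (hx : x ∈ U) (hy : y ≠ 0)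
    (i : Fin n) :
    fderiv ℝ (FF a bv gv Ψ) (x, y) (0, Pi.single i 1) = Fi a bv gv Ψ i (x, y) := by
  rw [H.fd_F _ _ hx hy, dF, dal_y, dbe_y, dbe_y, Fi]

lemma Hyp.fdy_Fi (H : Hyp U a bv gv b₀ g₀ Ψ) {x y : Fin n → ℝ} (hx : x ∈ U) (hy : y ≠ 0)
    (i j : Fin n) :
    fderiv ℝ (Fi a bv gv Ψ i) (x, y) (0, Pi.single j 1) = Fij (a x) (bv x) (gv x) Ψ y
      (sVar (a x) (bv x) y) (sVar (a x) (gv x) y) i j := by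
  have hα := alph_pos (H.haP _ hx) hy
  rw [H.fd_Fi _ _ _ hx hy, dFi, dal_y, dsv_y, dsv_y, Fij]
  have : dlow a x y 0 (Pi.single j 1) i = a x i j := by simp [dlow, Pi.single_apply]
  rw [this]
  simp only [map_zero]
  field_simp
  ring

lemma Fij_symm {A : Matrix (Fin n) (Fin n) ℝ} (hA : A.PosDef) (b g : Fin n → ℝ)
    (y : Fin n → ℝ) (p q : ℝ) (i j : Fin n) :
    Fij A b g Ψ y p q i j = Fij A b g Ψ y p q j i := by
  rw [Fij, Fij, pd_symm_a hA i j]; ring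

lemma sum_l {A : Matrix (Fin n) (Fin n) ℝ} (hA : A.PosDef) {y : Fin n → ℝ} (hy : y ≠ 0) :
    ∑ j, y j * (lowr A y j / alph A y) = alph A y := by
  have hα := alph_pos hA hy
  have h := alph_sq hA hy
  have : ∑ j, y j * (lowr A y j / alph A y) = (∑ j, y j * lowr A y j) / alph A y := by
    rw [Finset.sum_div]; exact Finset.sum_congr rfl fun i _ => by ring
  rw [this, ← h]; field_simp

lemma sum_h {A : Matrix (Fin n) (Fin n) ℝ} (hA : A.PosDef) (b : Fin n → ℝ) {y : Fin n → ℝ}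
    (hy : y ≠ 0) : ∑ j, y j * hx A b y j = 0 := by
  have hα := alph_pos hA hy
  have : ∑ j, y j * hx A b y j =
      oneForm b y - sVar A b y * ∑ j, y j * (lowr A y j / alph A y) := by
    rw [Finset.mul_sum, oneForm, ← Finset.sum_sub_distrib]
    exact Finset.sum_congr rfl fun i _ => by rw [hx]; ring
  rw [this, sum_l hA hy, sVar]; field_simp; ring

lemma Fij_mul (A : Matrix (Fin n) (Fin n) ℝ) (b g y v : Fin n → ℝ) (p q : ℝ) (i : Fin n) :
    ∑ j, v j * Fij A b g Ψ y p q i j =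
    ((lowr A v i - lowr A y i / alph A y * (∑ j, v j * (lowr A y j / alph A y))) * PiF Ψ p q
    + (Ds (Ds Ψ) p q * (∑ j, v j * hx A b y j) + Dt (Ds Ψ) p q * (∑ j, v j * hx A g y j))
      * hx A b y i
    + (Dt (Ds Ψ) p q * (∑ j, v j * hx A b y j) + Dt (Dt Ψ) p q * (∑ j, v j * hx A g y j))
      * hx A g y i) / alph A y := by
  have e : lowr A v i = ∑ j, A i j * v j := rfl
  rw [e]
  simp only [Fij, Finset.mul_sum, Finset.sum_mul, ← Finset.sum_sub_distrib,
    ← Finset.sum_add_distrib, Finset.sum_div]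
  exact Finset.sum_congr rfl fun j _ => by ring

lemma Fij_y {A : Matrix (Fin n) (Fin n) ℝ} (hA : A.PosDef) (b g : Fin n → ℝ) {y : Fin n → ℝ}
    (hy : y ≠ 0) (p q : ℝ) (i : Fin n) :
    ∑ j, y j * Fij A b g Ψ y p q i j = 0 := by
  have hα := alph_pos hA hy
  rw [Fij_mul, sum_l hA hy, sum_h hA _ hy, sum_h hA _ hy]
  field_simp; ring

lemma Hyp.Fi_y (H : Hyp U a bv gv b₀ g₀ Ψ) {x y : Fin n → ℝ} (hx : x ∈ U) (hy : y ≠ 0) :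
    ∑ i, y i * Fi a bv gv Ψ i (x, y) = FF a bv gv Ψ (x, y) := by
  have hα := alph_pos (H.haP _ hx) hy
  have : ∑ i, y i * Fi a bv gv Ψ i (x, y) =
      (∑ j, y j * (lowr (a x) y j / alph (a x) y))
        * PiF Ψ (sVar (a x) (bv x) y) (sVar (a x) (gv x) y)
      + Ds Ψ (sVar (a x) (bv x) y) (sVar (a x) (gv x) y) * oneForm (bv x) y
      + Dt Ψ (sVar (a x) (bv x) y) (sVar (a x) (gv x) y) * oneForm (gv x) y := by
    simp only [Fi, oneForm, Finset.mul_sum, Finset.sum_mul, ← Finset.sum_add_distrib]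
    exact Finset.sum_congr rfl fun j _ => by ring
  have e1 : oneForm (bv x) y = alph (a x) y * sVar (a x) (bv x) y := by rw [sVar]; field_simp
  have e2 : oneForm (gv x) y = alph (a x) y * sVar (a x) (gv x) y := by rw [sVar]; field_simp
  rw [this, sum_l (H.haP _ hx) hy, e1, e2, FF, Fm, PiF]
  ring

/-- the fundamental tensor as a smooth function -/
def gf (a : (Fin n → ℝ) → Matrix (Fin n) (Fin n) ℝ) (bv gv : (Fin n → ℝ) → Fin n → ℝ)
    (Ψ : ℝ → ℝ → ℝ) (i j : Fin n) (z : (Fin n → ℝ) × (Fin n → ℝ)) : ℝ :=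
  FF a bv gv Ψ z * fderiv ℝ (Fi a bv gv Ψ j) z (0, Pi.single i 1)
    + Fi a bv gv Ψ i z * Fi a bv gv Ψ j z

lemma Hyp.cd_gf (H : Hyp U a bv gv b₀ g₀ Ψ) (i j : Fin n) :
    ContDiffOn ℝ (⊤ : ℕ∞) (gf a bv gv Ψ i j) (Om U) :=
  (H.cd_F.mul (cd_fderiv (om_open H.hU) (H.cd_Fi j) _)).add ((H.cd_Fi i).mul (H.cd_Fi j))

lemma Hyp.gf_y (H : Hyp U a bv gv b₀ g₀ Ψ) {x y : Fin n → ℝ} (hx : x ∈ U) (hy : y ≠ 0)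
    (j : Fin n) :
    ∑ i, y i * gf a bv gv Ψ i j (x, y) = FF a bv gv Ψ (x, y) * Fi a bv gv Ψ j (x, y) := by
  simp only [gf, H.fdy_Fi hx hy]
  have := Fij_y (Ψ := Ψ) (H.haP x hx) (bv x) (gv x) hy (sVar (a x) (bv x) y) (sVar (a x) (gv x) y) j
  have h2 := H.Fi_y hx hy
  calc _ = FF a bv gv Ψ (x, y) * (∑ i, y i * Fij (a x) (bv x) (gv x) Ψ y
            (sVar (a x) (bv x) y) (sVar (a x) (gv x) y) j i)
        + (∑ i, y i * Fi a bv gv Ψ i (x, y)) * Fi a bv gv Ψ j (x, y) := by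
          simp only [Finset.mul_sum, Finset.sum_mul, ← Finset.sum_add_distrib]
          exact Finset.sum_congr rfl fun j _ => by ring
    _ = _ := by rw [this, h2]; ring

lemma Hyp.gf_symm (H : Hyp U a bv gv b₀ g₀ Ψ) {x y : Fin n → ℝ} (hx : x ∈ U) (hy : y ≠ 0)
    (i j : Fin n) : gf a bv gv Ψ i j (x, y) = gf a bv gv Ψ j i (x, y) := by
  simp only [gf, H.fdy_Fi hx hy]
  rw [Fij_symm (H.haP x hx)]; ring

lemma Hyp.pd_F (H : Hyp U a bv gv b₀ g₀ Ψ) {x y : Fin n → ℝ} (hx : x ∈ U) (hy : y ≠ 0)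
    (i : Fin n) : pd (Fm (a x) (bv x) (gv x) Ψ) y i = Fi a bv gv Ψ i (x, y) := by
  rw [← H.fdy_F hx hy, ← pdy_eq (cd_diff (om_open H.hU) H.cd_F ⟨hx, hy⟩)]
  rfl

lemma Hyp.pd2_F (H : Hyp U a bv gv b₀ g₀ Ψ) {x y : Fin n → ℝ} (hx : x ∈ U) (hy : y ≠ 0)
    (i j : Fin n) : pd2 (Fm (a x) (bv x) (gv x) Ψ) y i j
      = fderiv ℝ (Fi a bv gv Ψ j) (x, y) (0, Pi.single i 1) := by
  rw [pd2, pd_congr_ne hy (fun w hw => H.pd_F hx hw j),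
    pdy_eq (cd_diff (om_open H.hU) (H.cd_Fi j) ⟨hx, hy⟩)]

lemma Hyp.gmat (H : Hyp U a bv gv b₀ g₀ Ψ) {x y : Fin n → ℝ} (hx : x ∈ U) (hy : y ≠ 0)
    (i j : Fin n) : gmatF (fun z w => Fm (a z) (bv z) (gv z) Ψ w) x y i j
      = gf a bv gv Ψ i j (x, y) := by
  have ho := om_open H.hU
  have e : ∀ w, w ≠ 0 → pd (fun z => Fm (a x) (bv x) (gv x) Ψ z ^ 2) w j
      = 2 * (FF a bv gv Ψ (x, w) * Fi a bv gv Ψ j (x, w)) := by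
    intro w hw
    have hd := cd_diff ho H.cd_F (z := (x, w)) ⟨hx, hw⟩
    have := pdy_eq (f := fun z => FF a bv gv Ψ z ^ 2) (hd.pow 2) j
    refine this.trans ?_
    rw [fderiv_fun_pow 2 hd]
    simp only [smul_apply, H.fdy_F hx hw]
    simp; ring
  change (1 / 2) * pd2 (fun z => Fm (a x) (bv x) (gv x) Ψ z ^ 2) y i j = _
  rw [pd2, pd_congr_ne hy e]
  have hd := cd_diff ho H.cd_F (z := (x, y)) ⟨hx, hy⟩
  have hd2 := cd_diff ho (H.cd_Fi j) (z := (x, y)) ⟨hx, hy⟩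
  rw [pdy_eq (f := fun z => 2 * (FF a bv gv Ψ z * Fi a bv gv Ψ j z)) ((hd.mul hd2).const_mul 2),
    fderiv_const_mul (hd.fun_mul hd2), fderiv_fun_mul hd hd2]
  simp only [smul_apply, add_apply, H.fdy_F hx hy, gf,
    smul_eq_mul]
  ring

lemma Hyp.pd_gmat (H : Hyp U a bv gv b₀ g₀ Ψ) {x y : Fin n → ℝ} (hx : x ∈ U) (hy : y ≠ 0)
    (i j k : Fin n) : pd (fun z => gmatF (fun z w => Fm (a z) (bv z) (gv z) Ψ w) z y i j) x k
      = fderiv ℝ (gf a bv gv Ψ i j) (x, y) (Pi.single k 1, 0) := by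
  rw [pd_congr_U H.hU hx (fun z hz => H.gmat hz hy i j),
    pdx_eq (cd_diff (om_open H.hU) (H.cd_gf i j) ⟨hx, hy⟩)]

/-! ### Nondegeneracy -/

lemma rais_lowr {A : Matrix (Fin n) (Fin n) ℝ} (hA : A.PosDef) (u : Fin n → ℝ) (i : Fin n) :
    rais A (lowr A u) i = u i := by
  have h1 : A⁻¹.mulVec (A.mulVec u) = u := by
    rw [Matrix.mulVec_mulVec, Matrix.nonsing_inv_mul _ hA.det_pos.ne'.isUnit, Matrix.one_mulVec]
  exact congrFun h1 i

lemma rais_contr {A : Matrix (Fin n) (Fin n) ℝ} (hA : A.PosDef) (u v : Fin n → ℝ) :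
    ∑ i, rais A u i * lowr A v i = ∑ i, v i * u i := by
  rw [lowr_symm hA]; simp only [lowr_rais hA]

lemma quadInv_symm {A : Matrix (Fin n) (Fin n) ℝ} (hA : A.PosDef) (u v : Fin n → ℝ) :
    quadInv A u v = quadInv A v u := by
  rw [quadInv_eq, quadInv_eq]
  have := lowr_symm hA (rais A v) (rais A u)
  simp only [lowr_rais hA] at this
  rw [Finset.sum_congr rfl fun i _ => mul_comm (u i) _, this]
  exact Finset.sum_congr rfl fun i _ => mul_comm _ _

lemma rais_hx {A : Matrix (Fin n) (Fin n) ℝ} (hA : A.PosDef) (g y : Fin n → ℝ) (i : Fin n) :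
    rais A (hx A g y) i = rais A g i - sVar A g y * (y i / alph A y) := by
  have h := rais_lowr hA y i
  rw [← h]
  simp only [rais, hx, Finset.mul_sum, Finset.sum_div, ← Finset.sum_sub_distrib]
  exact Finset.sum_congr rfl fun j _ => by ring

lemma quad_hx {A : Matrix (Fin n) (Fin n) ℝ} (hA : A.PosDef) (b g : Fin n → ℝ) {y : Fin n → ℝ}
    (hy : y ≠ 0) :
    ∑ i, rais A (hx A g y) i * hx A b y i = quadInv A b g - sVar A b y * sVar A g y := by
  have hα := alph_pos hA hy
  have h1 := sum_h hA b hy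
  have h2 := rais_contr hA g y
  have e : ∑ i, rais A (hx A g y) i * hx A b y i =
      (∑ i, b i * rais A g i) - sVar A b y / alph A y * (∑ i, rais A g i * lowr A y i)
       - sVar A g y / alph A y * (∑ i, y i * hx A b y i) := by
    simp only [rais_hx hA, Finset.mul_sum, ← Finset.sum_sub_distrib]
    exact Finset.sum_congr rfl fun j _ => by rw [hx]; ring
  have h3 : ∑ i, y i * g i = alph A y * sVar A g y := by
    rw [sVar, oneForm]; field_simp
    exact Finset.sum_congr rfl fun i _ => mul_comm _ _
  rw [e, h1, h2, ← quadInv_eq, h3]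
  field_simp
  ring

lemma ker_Fij {A : Matrix (Fin n) (Fin n) ℝ} (hA : A.PosDef) (b g : Fin n → ℝ) {y : Fin n → ℝ}
    (hy : y ≠ 0) {p q : ℝ} (hp : p = sVar A b y) (hq : q = sVar A g y) (hPi : 0 < PiF Ψ p q)
    (hG : 0 < GammaF Ψ (quadInv A b b) (quadInv A g g) (quadInv A b g) p q)
    (v : Fin n → ℝ) (hv : ∀ i, ∑ j, v j * Fij A b g Ψ y p q i j = 0) :
    ∃ c : ℝ, ∀ i, v i = c * y i := by
  have hα := alph_pos hA hy
  set P := PiF Ψ p q with hP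
  set A1 := Ds (Ds Ψ) p q with hA1
  set A2 := Dt (Ds Ψ) p q with hA2
  set A3 := Dt (Dt Ψ) p q with hA3
  set hb := ∑ j, v j * hx A b y j with hhb
  set hg := ∑ j, v j * hx A g y j with hhg
  set L := ∑ j, v j * (lowr A y j / alph A y) with hL
  have e : ∀ i, (lowr A v i - lowr A y i / alph A y * L) * P
      + (A1 * hb + A2 * hg) * hx A b y i + (A2 * hb + A3 * hg) * hx A g y i = 0 := by
    intro i
    have := hv i
    rw [Fij_mul] at this
    rcases div_eq_zero_iff.1 this with h | h
    · exact h
    · exact absurd h hα.ne'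
  have contr : ∀ w : Fin n → ℝ, (∑ i, y i * w i = 0) → (∑ i, v i * w i) * P
      + (A1 * hb + A2 * hg) * (∑ i, rais A w i * hx A b y i)
      + (A2 * hb + A3 * hg) * (∑ i, rais A w i * hx A g y i) = 0 := by
    intro w hw
    have h0 : ∑ i, rais A w i * ((lowr A v i - lowr A y i / alph A y * L) * P
      + (A1 * hb + A2 * hg) * hx A b y i + (A2 * hb + A3 * hg) * hx A g y i) = 0 := by
      simp [e]
    have h1 : ∑ i, rais A w i * ((lowr A v i - lowr A y i / alph A y * L) * P
      + (A1 * hb + A2 * hg) * hx A b y i + (A2 * hb + A3 * hg) * hx A g y i)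
      = ((∑ i, rais A w i * lowr A v i) - (∑ i, rais A w i * lowr A y i) / alph A y * L) * P
      + (A1 * hb + A2 * hg) * (∑ i, rais A w i * hx A b y i)
      + (A2 * hb + A3 * hg) * (∑ i, rais A w i * hx A g y i) := by
      simp only [Finset.mul_sum, Finset.sum_mul, Finset.sum_div, ← Finset.sum_sub_distrib,
        ← Finset.sum_add_distrib]
      exact Finset.sum_congr rfl fun j _ => by ring
    rw [h1, rais_contr hA, rais_contr hA, hw] at h0
    simpa using h0
  have E1 := contr _ (sum_h hA b hy)
  have E2 := contr _ (sum_h hA g hy)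
  rw [quad_hx hA _ _ hy, quad_hx hA _ _ hy, ← hp, ← hq] at E1 E2
  rw [quadInv_symm hA g b] at E1
  rw [← hhb] at E1
  rw [← hhg] at E2
  set B := quadInv A b b
  set G := quadInv A g g
  set T := quadInv A b g
  have hdet : P * GammaF Ψ B G T p q = (P + A1 * (B - p * p) + A2 * (T - q * p))
        * (P + A2 * (T - p * q) + A3 * (G - q * q))
      - (A2 * (B - p * p) + A3 * (T - q * p)) * (A1 * (T - p * q) + A2 * (G - q * q)) := by
    rw [GammaF, JF, ← hP, ← hA1, ← hA2, ← hA3]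
    field_simp
    ring
  have hne : P * GammaF Ψ B G T p q ≠ 0 := (mul_pos hPi hG).ne'
  have hb0 : hb = 0 := by
    have : hb * (P * GammaF Ψ B G T p q) = 0 := by
      rw [hdet]
      linear_combination (P + A2 * (T - p * q) + A3 * (G - q * q)) * E1
        - (A2 * (B - p * p) + A3 * (T - q * p)) * E2
    exact (mul_eq_zero.1 this).resolve_right hne
  have hg0 : hg = 0 := by
    have : hg * (P * GammaF Ψ B G T p q) = 0 := by
      rw [hdet]
      linear_combination (P + A1 * (B - p * p) + A2 * (T - q * p)) * E2
        - (A1 * (T - p * q) + A2 * (G - q * q)) * E1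
    exact (mul_eq_zero.1 this).resolve_right hne
  refine ⟨L / alph A y, fun i => ?_⟩
  have hl : lowr A v = fun i => L / alph A y * lowr A y i := by
    funext i
    have := e i
    rw [hb0, hg0] at this
    have h3 : (lowr A v i - lowr A y i / alph A y * L) * P = 0 := by linear_combination this
    have := (mul_eq_zero.1 h3).resolve_right hPi.ne'
    linear_combination this
  rw [← rais_lowr hA v i, hl, ← rais_lowr hA y i]
  simp only [rais, Finset.mul_sum]
  refine Finset.sum_congr rfl fun j _ => ?_
  ring

lemma Hyp.det_ne (H : Hyp U a bv gv b₀ g₀ Ψ) {x y : Fin n → ℝ} (hx : x ∈ U) (hy : y ≠ 0)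
    (hΨ : 0 < Ψ (sVar (a x) (bv x) y) (sVar (a x) (gv x) y))
    (hPi : 0 < PiF Ψ (sVar (a x) (bv x) y) (sVar (a x) (gv x) y))
    (hG : 0 < GammaF Ψ (quadInv (a x) (bv x) (bv x)) (quadInv (a x) (gv x) (gv x))
      (quadInv (a x) (bv x) (gv x)) (sVar (a x) (bv x) y) (sVar (a x) (gv x) y)) :
    (gmatF (fun z w => Fm (a z) (bv z) (gv z) Ψ w) x y).det ≠ 0 := by
  intro h0
  obtain ⟨v, hv0, hv⟩ := Matrix.exists_mulVec_eq_zero_iff.2 h0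
  have hF : 0 < FF a bv gv Ψ (x, y) := mul_pos (alph_pos (H.haP _ hx) hy) hΨ
  have e : ∀ i, ∑ j, gf a bv gv Ψ i j (x, y) * v j = 0 := by
    intro i
    have := congrFun hv i
    simpa only [Matrix.mulVec, dotProduct, H.gmat hx hy, Pi.zero_apply] using this
  have e1 : ∑ j, v j * Fi a bv gv Ψ j (x, y) = 0 := by
    have h1 : ∑ i, y i * ∑ j, gf a bv gv Ψ i j (x, y) * v j = 0 := by simp [e]
    have h2 : ∑ i, y i * ∑ j, gf a bv gv Ψ i j (x, y) * v j
        = ∑ j, (∑ i, y i * gf a bv gv Ψ i j (x, y)) * v j := by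
      simp only [Finset.mul_sum, Finset.sum_mul]
      rw [Finset.sum_comm]
      exact Finset.sum_congr rfl fun i _ => Finset.sum_congr rfl fun j _ => by ring
    rw [h2] at h1
    simp only [H.gf_y hx hy] at h1
    have h3 : FF a bv gv Ψ (x, y) * ∑ j, v j * Fi a bv gv Ψ j (x, y) = 0 := by
      rw [← h1, Finset.mul_sum]
      exact Finset.sum_congr rfl fun i _ => by ring
    exact (mul_eq_zero.1 h3).resolve_left hF.ne'
  have e2 : ∀ i, ∑ j, v j * Fij (a x) (bv x) (gv x) Ψ y
      (sVar (a x) (bv x) y) (sVar (a x) (gv x) y) i j = 0 := by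
    intro i
    have h1 := e i
    simp only [gf, H.fdy_Fi hx hy] at h1
    have h2 : FF a bv gv Ψ (x, y) * (∑ j, v j * Fij (a x) (bv x) (gv x) Ψ y
      (sVar (a x) (bv x) y) (sVar (a x) (gv x) y) i j)
      + Fi a bv gv Ψ i (x, y) * ∑ j, v j * Fi a bv gv Ψ j (x, y) = 0 := by
      rw [← h1, Finset.mul_sum, Finset.mul_sum, ← Finset.sum_add_distrib]
      refine Finset.sum_congr rfl fun j _ => ?_
      rw [Fij_symm (H.haP x hx) _ _ _ _ _ i j]; ring
    rw [e1, mul_zero, add_zero] at h2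
    exact (mul_eq_zero.1 h2).resolve_left hF.ne'
  obtain ⟨c, hc⟩ := ker_Fij (H.haP x hx) (bv x) (gv x) hy rfl rfl hPi hG v e2
  have h4 : c * FF a bv gv Ψ (x, y) = 0 := by
    rw [← H.Fi_y hx hy, ← e1, Finset.mul_sum]
    exact Finset.sum_congr rfl fun j _ => by rw [hc]; ring
  have hc0 := (mul_eq_zero.1 h4).resolve_right hF.ne'
  exact hv0 (funext fun i => by rw [hc, hc0]; simp)

/-! ### The spray equation -/

lemma Hyp.fd_mul (H : Hyp U a bv gv b₀ g₀ Ψ) {x y : Fin n → ℝ} (hx : x ∈ U) (hy : y ≠ 0)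
    {f g : (Fin n → ℝ) × (Fin n → ℝ) → ℝ} (hf : ContDiffOn ℝ (⊤ : ℕ∞) f (Om U))
    (hg : ContDiffOn ℝ (⊤ : ℕ∞) g (Om U)) (w : (Fin n → ℝ) × (Fin n → ℝ)) :
    fderiv ℝ (fun z => f z * g z) (x, y) w
      = f (x, y) * fderiv ℝ g (x, y) w + g (x, y) * fderiv ℝ f (x, y) w := by
  have ho := om_open H.hU
  rw [fderiv_fun_mul (cd_diff ho hf ⟨hx, hy⟩) (cd_diff ho hg ⟨hx, hy⟩)]
  rfl

lemma Hyp.spray (H : Hyp U a bv gv b₀ g₀ Ψ) {x y : Fin n → ℝ} (hx : x ∈ U) (hy : y ≠ 0)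
    (hΨ : 0 < Ψ (sVar (a x) (bv x) y) (sVar (a x) (gv x) y))
    (hdet : (gmatF (fun z w => Fm (a z) (bv z) (gv z) Ψ w) x y).det ≠ 0) (i : Fin n) :
    ∑ r, pd2 (Fm (a x) (bv x) (gv x) Ψ) y i r *
      (2 * sprayF (fun z w => Fm (a z) (bv z) (gv z) Ψ w) x y r)
    = fderiv ℝ (Fi a bv gv Ψ i) (x, y) (y, 0)
      - fderiv ℝ (FF a bv gv Ψ) (x, y) (Pi.single i 1, 0) := by
  have ho := om_open H.hU
  have hF : 0 < FF a bv gv Ψ (x, y) := mul_pos (alph_pos (H.haP _ hx) hy) hΨ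
  set F := FF a bv gv Ψ (x, y) with hFdef
  set M := gmatF (fun z w => Fm (a z) (bv z) (gv z) Ψ w) x y with hM
  set G := fun r => sprayF (fun z w => Fm (a z) (bv z) (gv z) Ψ w) x y r with hG
  set dyF := fderiv ℝ (FF a bv gv Ψ) (x, y) (y, 0) with hdyF
  set Q : Fin n → ℝ := fun l => ∑ j, ∑ k,
      (fderiv ℝ (gf a bv gv Ψ j l) (x, y) (Pi.single k 1, 0)
        + fderiv ℝ (gf a bv gv Ψ l k) (x, y) (Pi.single j 1, 0)
        - fderiv ℝ (gf a bv gv Ψ j k) (x, y) (Pi.single l 1, 0)) * y j * y k with hQ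
  have cdm : ∀ l, ContDiffOn ℝ (⊤ : ℕ∞) (fun z => FF a bv gv Ψ z * Fi a bv gv Ψ l z) (Om U) :=
    fun l => H.cd_F.mul (H.cd_Fi l)
  -- value of Q
  have c1 : ∀ l w, ∑ j, y j * fderiv ℝ (gf a bv gv Ψ j l) (x, y) (w, 0)
      = F * fderiv ℝ (Fi a bv gv Ψ l) (x, y) (w, 0)
        + Fi a bv gv Ψ l (x, y) * fderiv ℝ (FF a bv gv Ψ) (x, y) (w, 0) := by
    intro l w
    rw [fd_lin H.hU hx hy (fun j => H.cd_gf j l) (cdm l) y (fun z hz => H.gf_y hz hy l) w,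
      H.fd_mul hx hy H.cd_F (H.cd_Fi l)]
  have c2 : ∀ l w, ∑ k, y k * fderiv ℝ (gf a bv gv Ψ l k) (x, y) (w, 0)
      = F * fderiv ℝ (Fi a bv gv Ψ l) (x, y) (w, 0)
        + Fi a bv gv Ψ l (x, y) * fderiv ℝ (FF a bv gv Ψ) (x, y) (w, 0) := by
    intro l w
    rw [fd_lin H.hU hx hy (fun j => H.cd_gf l j) (cdm l) y (fun z hz => by
      simp only [H.gf_symm hz hy l]; exact H.gf_y hz hy l) w,
      H.fd_mul hx hy H.cd_F (H.cd_Fi l)]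
  have c3 : ∀ w, ∑ l, y l * fderiv ℝ (Fi a bv gv Ψ l) (x, y) (w, 0)
      = fderiv ℝ (FF a bv gv Ψ) (x, y) (w, 0) := fun w =>
    fd_lin H.hU hx hy H.cd_Fi H.cd_F y (fun z hz => H.Fi_y hz hy) w
  have Qv : ∀ l, Q l = 2 * (F * fderiv ℝ (Fi a bv gv Ψ l) (x, y) (y, 0)
      + Fi a bv gv Ψ l (x, y) * dyF)
      - 2 * F * fderiv ℝ (FF a bv gv Ψ) (x, y) (Pi.single l 1, 0) := by
    intro l
    have q1 : Q l = (∑ j, y j * ∑ k, y k * fderiv ℝ (gf a bv gv Ψ j l) (x, y) (Pi.single k 1, 0))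
        + (∑ k, y k * ∑ j, y j * fderiv ℝ (gf a bv gv Ψ l k) (x, y) (Pi.single j 1, 0))
        - ∑ k, y k * ∑ j, y j * fderiv ℝ (gf a bv gv Ψ j k) (x, y) (Pi.single l 1, 0) := by
      simp only [Finset.mul_sum]
      rw [Finset.sum_comm (f := fun k j => y k * (y j *
        fderiv ℝ (gf a bv gv Ψ l k) (x, y) (Pi.single j 1, 0))),
        Finset.sum_comm (f := fun k j => y k * (y j *
        fderiv ℝ (gf a bv gv Ψ j k) (x, y) (Pi.single l 1, 0)))]
      simp only [← Finset.sum_add_distrib, ← Finset.sum_sub_distrib]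
      exact Finset.sum_congr rfl fun i _ => Finset.sum_congr rfl fun j _ => by ring
    have q3 : ∑ k, y k * (F * fderiv ℝ (Fi a bv gv Ψ k) (x, y) (Pi.single l 1, 0)
        + Fi a bv gv Ψ k (x, y) * fderiv ℝ (FF a bv gv Ψ) (x, y) (Pi.single l 1, 0))
        = F * (∑ k, y k * fderiv ℝ (Fi a bv gv Ψ k) (x, y) (Pi.single l 1, 0))
         + (∑ k, y k * Fi a bv gv Ψ k (x, y))
          * fderiv ℝ (FF a bv gv Ψ) (x, y) (Pi.single l 1, 0) := by
      simp only [Finset.mul_sum, Finset.sum_mul, ← Finset.sum_add_distrib]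
      exact Finset.sum_congr rfl fun i _ => by ring
    rw [q1]
    simp only [fd_sum1, c1, c2]
    rw [q3, c3, H.Fi_y hx hy]
    ring
  have Geq : ∀ r, G r = (1 / 4) * M⁻¹.mulVec Q r := by
    intro r
    simp only [hG, sprayF, H.pd_gmat hx hy, Matrix.mulVec, dotProduct, hQ, hM]
  have MG : ∀ l, ∑ r, gf a bv gv Ψ l r (x, y) * G r = (1 / 4) * Q l := by
    intro l
    have h1 : M.mulVec (M⁻¹.mulVec Q) = Q := by
      rw [Matrix.mulVec_mulVec, Matrix.mul_nonsing_inv _ hdet.isUnit, Matrix.one_mulVec]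
    have h2 := congrFun h1 l
    rw [← h2]
    simp only [Geq]
    conv_rhs => rw [Matrix.mulVec, dotProduct, Finset.mul_sum]
    refine Finset.sum_congr rfl fun r _ => ?_
    rw [hM, H.gmat hx hy]; ring
  have split : ∀ l, ∑ r, gf a bv gv Ψ l r (x, y) * G r
      = F * (∑ r, fderiv ℝ (Fi a bv gv Ψ r) (x, y) (0, Pi.single l 1) * G r)
        + Fi a bv gv Ψ l (x, y) * ∑ r, Fi a bv gv Ψ r (x, y) * G r := by
    intro l
    simp only [gf, Finset.mul_sum, ← Finset.sum_add_distrib]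
    exact Finset.sum_congr rfl fun i _ => by ring
  have K : 2 * ∑ r, Fi a bv gv Ψ r (x, y) * G r = dyF := by
    have h1 : ∑ l, y l * ∑ r, gf a bv gv Ψ l r (x, y) * G r = ∑ l, y l * ((1 / 4) * Q l) := by
      simp only [MG]
    have h2 : ∑ l, y l * ∑ r, gf a bv gv Ψ l r (x, y) * G r
        = F * ∑ r, Fi a bv gv Ψ r (x, y) * G r := by
      have : ∑ l, y l * ∑ r, gf a bv gv Ψ l r (x, y) * G r
        = ∑ r, (∑ l, y l * gf a bv gv Ψ l r (x, y)) * G r := by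
        simp only [Finset.mul_sum, Finset.sum_mul]
        rw [Finset.sum_comm]
        exact Finset.sum_congr rfl fun i _ => Finset.sum_congr rfl fun j _ => by ring
      rw [this, Finset.mul_sum]
      refine Finset.sum_congr rfl fun i _ => ?_
      rw [H.gf_y hx hy]; ring
    have h3 : ∑ l, y l * ((1 / 4) * Q l)
        = (1 / 2) * (F * (∑ l, y l * fderiv ℝ (Fi a bv gv Ψ l) (x, y) (y, 0))
          + (∑ l, y l * Fi a bv gv Ψ l (x, y)) * dyF)
          - (1 / 2) * F * ∑ l, y l * fderiv ℝ (FF a bv gv Ψ) (x, y) (Pi.single l 1, 0) := by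
      simp only [Qv, Finset.mul_sum, Finset.sum_mul, ← Finset.sum_add_distrib,
        ← Finset.sum_sub_distrib]
      exact Finset.sum_congr rfl fun i _ => by ring
    rw [c3, fd_sum1, H.Fi_y hx hy] at h3
    have h4 : F * (2 * ∑ r, Fi a bv gv Ψ r (x, y) * G r - dyF) = 0 := by
      have := h2.symm.trans (h1.trans h3)
      linear_combination 2 * this
    have := (mul_eq_zero.1 h4).resolve_left hF.ne'
    linarith
  have fin := MG i
  rw [split, Qv] at fin
  have e1 : ∑ r, pd2 (Fm (a x) (bv x) (gv x) Ψ) y i r * (2 * G r)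
      = 2 * ∑ r, fderiv ℝ (Fi a bv gv Ψ r) (x, y) (0, Pi.single i 1) * G r := by
    rw [Finset.mul_sum]
    exact Finset.sum_congr rfl fun r _ => by rw [H.pd2_F hx hy]; ring
  change ∑ r, pd2 (Fm (a x) (bv x) (gv x) Ψ) y i r * (2 * G r) = _
  rw [e1]
  refine mul_left_cancel₀ hF.ne' ?_
  linear_combination 2 * fin - Fi a bv gv Ψ i (x, y) * K

/-! ### Covariant derivatives -/

lemma Hyp.pda_symm (H : Hyp U a bv gv b₀ g₀ Ψ) {x : Fin n → ℝ} (hx : x ∈ U) (i j k : Fin n) :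
    pd (fun z => a z i j) x k = pd (fun z => a z j i) x k :=
  pd_congr_U H.hU hx (fun z hz => pd_symm_a (H.haP z hz) i j) k

lemma Hyp.chr_symm (H : Hyp U a bv gv b₀ g₀ Ψ) {x : Fin n → ℝ} (hx : x ∈ U) (k i j : Fin n) :
    chr a x k i j = chr a x k j i := by
  rw [chr, chr]
  congr 1
  refine Finset.sum_congr rfl fun l _ => ?_
  rw [H.pda_symm hx i j]; ring

/-- `∂_i a_{jk} y^j y^k` -/
def Kd (a : (Fin n → ℝ) → Matrix (Fin n) (Fin n) ℝ) (x y : Fin n → ℝ) (i : Fin n) : ℝ :=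
  ∑ j, ∑ k, pd (fun z => a z j k) x i * y j * y k

lemma Hyp.low_aG (H : Hyp U a bv gv b₀ g₀ Ψ) {x : Fin n → ℝ} (hx : x ∈ U) (y : Fin n → ℝ)
    (i : Fin n) : ∑ r, a x i r * (2 * alphaG a x y r)
      = (∑ j, fderiv ℝ (fun z => a z i j) x y * y j) - (1 / 2) * Kd a x y i := by
  set q : Fin n → ℝ := fun l => ∑ j, ∑ k, (1 / 2) * (pd (fun z => a z k l) x j
    + pd (fun z => a z j l) x k - pd (fun z => a z j k) x l) * y j * y k with hq
  have h1 : ∀ r, 2 * alphaG a x y r = rais (a x) q r := by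
    intro r
    simp only [alphaG, chr, rais, hq, Finset.mul_sum, Finset.sum_mul]
    rw [Finset.sum_comm_cycle]
    exact Finset.sum_congr rfl fun i _ => Finset.sum_congr rfl fun j _ =>
      Finset.sum_congr rfl fun k _ => by ring
  simp only [h1]
  have h2 := lowr_rais (H.haP x hx) q i
  rw [lowr] at h2
  rw [h2]
  have h3 : q i = (1 / 2) * (∑ j, ∑ k, pd (fun z => a z i k) x j * y j * y k)
      + (1 / 2) * (∑ j, ∑ k, pd (fun z => a z i j) x k * y j * y k) - (1 / 2) * Kd a x y i := by
    simp only [hq, Kd, Finset.mul_sum, ← Finset.sum_add_distrib, ← Finset.sum_sub_distrib]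
    refine Finset.sum_congr rfl fun j _ => Finset.sum_congr rfl fun k _ => ?_
    rw [H.pda_symm hx k i, H.pda_symm hx j i]; ring
  have h4 : ∑ j, ∑ k, pd (fun z => a z i k) x j * y j * y k
      = ∑ j, fderiv ℝ (fun z => a z i j) x y * y j := by
    rw [Finset.sum_comm]
    simp only [fd_sum, Finset.sum_mul]
    exact Finset.sum_congr rfl fun j _ => Finset.sum_congr rfl fun k _ => by ring
  have h5 : ∑ j, ∑ k, pd (fun z => a z i j) x k * y j * y k
      = ∑ j, fderiv ℝ (fun z => a z i j) x y * y j := by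
    simp only [fd_sum, Finset.sum_mul]
    exact Finset.sum_congr rfl fun j _ => Finset.sum_congr rfl fun k _ => by ring
  rw [h3, h4, h5]; ring

lemma Hyp.dlow_G (H : Hyp U a bv gv b₀ g₀ Ψ) {x : Fin n → ℝ} (hx : x ∈ U) (y : Fin n → ℝ)
    (i : Fin n) : dlow a x y y (fun r => -(2 * alphaG a x y r)) i = (1 / 2) * Kd a x y i := by
  have h := H.low_aG hx y i
  have : dlow a x y y (fun r => -(2 * alphaG a x y r)) i
      = (∑ j, fderiv ℝ (fun z => a z i j) x y * y j) - ∑ r, a x i r * (2 * alphaG a x y r) := by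
    rw [dlow, ← Finset.sum_sub_distrib]
    exact Finset.sum_congr rfl fun j _ => by ring
  rw [this, h]; ring

lemma Hyp.dal_G (H : Hyp U a bv gv b₀ g₀ Ψ) {x y : Fin n → ℝ} (hx : x ∈ U) (hy : y ≠ 0) :
    dal a x y y (fun r => -(2 * alphaG a x y r)) = 0 := by
  have hα := alph_pos (H.haP _ hx) hy
  have h := H.low_aG hx y
  have h1 : ∑ i, -(2 * alphaG a x y i) * lowr (a x) y i
      = -∑ i, y i * ∑ r, a x i r * (2 * alphaG a x y r) := by
    have := lowr_symm (H.haP x hx) y (fun r => 2 * alphaG a x y r)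
    simp only [lowr] at this ⊢
    rw [this, ← Finset.sum_neg_distrib]
    exact Finset.sum_congr rfl fun j _ => by ring
  have h2 : ∑ i, y i * Kd a x y i
      = ∑ i, ∑ j, fderiv ℝ (fun z => a z i j) x y * y i * y j := by
    simp only [Kd, fd_sum, Finset.mul_sum, Finset.sum_mul]
    rw [Finset.sum_comm]
    refine Finset.sum_congr rfl fun j _ => ?_
    rw [Finset.sum_comm]
    exact Finset.sum_congr rfl fun k _ => Finset.sum_congr rfl fun i _ => by ring
  have h3 : ∑ i, y i * ((∑ j, fderiv ℝ (fun z => a z i j) x y * y j) - (1 / 2) * Kd a x y i)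
      = (∑ i, ∑ j, fderiv ℝ (fun z => a z i j) x y * y i * y j)
        - (1 / 2) * ∑ i, y i * Kd a x y i := by
    simp only [Finset.mul_sum, mul_sub, Finset.sum_sub_distrib]
    congr 1
    · exact Finset.sum_congr rfl fun j _ => Finset.sum_congr rfl fun k _ => by ring
    · exact Finset.sum_congr rfl fun j _ => by ring
  rw [dal, h1]
  simp only [h]
  rw [h3, h2]
  field_simp
  ring

lemma dal_x (x y : Fin n → ℝ) (i : Fin n) :
    dal a x y (Pi.single i 1) 0 = Kd a x y i / (2 * alph (a x) y) := by
  simp [dal, Kd, pd]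

lemma dbe_G (b : (Fin n → ℝ) → Fin n → ℝ) (x y : Fin n → ℝ) :
    dbe b x y y (fun r => -(2 * alphaG a x y r)) = r00 a b x y := by
  have h1 : r00 a b x y = ∑ i, ∑ j, covD a b x i j * y i * y j := by
    have h2 : r00 a b x y = (1 / 2) * (∑ i, ∑ j, covD a b x i j * y i * y j)
        + (1 / 2) * (∑ i, ∑ j, covD a b x j i * y i * y j) := by
      simp only [r00, rSym, Finset.mul_sum, ← Finset.sum_add_distrib]
      exact Finset.sum_congr rfl fun j _ => Finset.sum_congr rfl fun k _ => by ring
    have h3 : ∑ i, ∑ j, covD a b x j i * y i * y j = ∑ i, ∑ j, covD a b x i j * y i * y j := by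
      rw [Finset.sum_comm]
      exact Finset.sum_congr rfl fun j _ => Finset.sum_congr rfl fun k _ => by ring
    rw [h2, h3]; ring
  have h4 : ∑ i, ∑ j, covD a b x i j * y i * y j
      = (∑ i, fderiv ℝ (fun z => b z i) x y * y i)
        - ∑ i, ∑ j, ∑ k, b x k * chr a x k i j * y i * y j := by
    simp only [covD, fd_sum, Finset.sum_mul, ← Finset.sum_sub_distrib, sub_mul]
    exact Finset.sum_congr rfl fun j _ => Finset.sum_congr rfl fun k _ => by ring
  have h5 : ∑ k, b x k * (2 * alphaG a x y k)
      = ∑ i, ∑ j, ∑ k, b x k * chr a x k i j * y i * y j := by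
    simp only [alphaG, Finset.mul_sum]
    rw [Finset.sum_comm]
    refine Finset.sum_congr rfl fun j _ => ?_
    rw [Finset.sum_comm]
    exact Finset.sum_congr rfl fun k _ => Finset.sum_congr rfl fun i _ => by ring
  rw [h1, h4, ← h5, dbe, ← Finset.sum_sub_distrib]
  exact Finset.sum_congr rfl fun j _ => by ring

lemma dbe_x (b : (Fin n → ℝ) → Fin n → ℝ) (x y : Fin n → ℝ) (i : Fin n) :
    dbe b x y (Pi.single i 1) 0 = ∑ k, pd (fun z => b z k) x i * y k := by
  simp [dbe, pd]

lemma Hyp.s0 (H : Hyp U a bv gv b₀ g₀ Ψ) {x : Fin n → ℝ} (hx : x ∈ U) (y : Fin n → ℝ)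
    (b : (Fin n → ℝ) → Fin n → ℝ) (i : Fin n) :
    2 * s0low a b x y i = fderiv ℝ (fun z => b z i) x y - ∑ k, pd (fun z => b z k) x i * y k := by
  rw [fd_sum, s0low, Finset.mul_sum, ← Finset.sum_sub_distrib]
  refine Finset.sum_congr rfl fun k _ => ?_
  simp only [sSym, covD, H.chr_symm hx _ k i]
  ring

lemma Hyp.hl_eq (H : Hyp U a bv gv b₀ g₀ Ψ) {x y : Fin n → ℝ} (hx : x ∈ U) (hy : y ≠ 0)
    (b : Fin n → ℝ) (i : Fin n) : hl (a x) b y i = _root_.hx (a x) b y i := by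
  have h1 : pd (alph (a x)) y i = lowr (a x) y i / alph (a x) y := by
    rw [← dal_y, ← H.fd_al _ _ hx hy, ← pdy_eq (cd_diff (om_open H.hU) H.cd_al ⟨hx, hy⟩)]
  rw [hl, h1, _root_.hx]

lemma Hyp.main (H : Hyp U a bv gv b₀ g₀ Ψ) {x y : Fin n → ℝ} (hx : x ∈ U) (hy : y ≠ 0)
    (hΨ : 0 < Ψ (sVar (a x) (bv x) y) (sVar (a x) (gv x) y))
    (hPi : 0 < PiF Ψ (sVar (a x) (bv x) y) (sVar (a x) (gv x) y))
    (hG : 0 < GammaF Ψ (quadInv (a x) (bv x) (bv x)) (quadInv (a x) (gv x) (gv x))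
      (quadInv (a x) (bv x) (gv x)) (sVar (a x) (bv x) y) (sVar (a x) (gv x) y)) (i : Fin n)
    (p q : ℝ) (hp : p = sVar (a x) (bv x) y) (hq : q = sVar (a x) (gv x) y) :
        2 * Ds Ψ p q * s0low a bv x y i + 2 * Dt Ψ p q * s0low a gv x y i =
          (∑ r, pd2 (Fm (a x) (bv x) (gv x) Ψ) y i r *
              (2 * sprayF (fun z w => Fm (a z) (bv z) (gv z) Ψ w) x y r
                - 2 * alphaG a x y r))
            - (1 / alph (a x) y) *
                (Ds (Ds Ψ) p q * r00 a bv x y + Dt (Ds Ψ) p q * r00 a gv x y)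
                * hl (a x) (bv x) y i
            - (1 / alph (a x) y) *
                (Dt (Ds Ψ) p q * r00 a bv x y + Dt (Dt Ψ) p q * r00 a gv x y)
                * hl (a x) (gv x) y i := by
  have hα := alph_pos (H.haP _ hx) hy
  have hsp := H.spray hx hy hΨ (H.det_ne hx hy hΨ hPi hG) i
  have e1 : ∑ r, pd2 (Fm (a x) (bv x) (gv x) Ψ) y i r *
              (2 * sprayF (fun z w => Fm (a z) (bv z) (gv z) Ψ w) x y r
                - 2 * alphaG a x y r)
      = fderiv ℝ (Fi a bv gv Ψ i) (x, y) (y, fun r => -(2 * alphaG a x y r))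
      - fderiv ℝ (FF a bv gv Ψ) (x, y) (Pi.single i 1, 0) := by
    have h1 : ((y, fun r => -(2 * alphaG a x y r)) : (Fin n → ℝ) × (Fin n → ℝ))
        = (y, 0) + (0, fun r => -(2 * alphaG a x y r)) := by simp
    rw [h1, map_add, ← fd_sum2]
    have h2 : ∀ r, fderiv ℝ (Fi a bv gv Ψ i) (x, y) (0, Pi.single r 1)
        = pd2 (Fm (a x) (bv x) (gv x) Ψ) y i r := by
      intro r
      rw [H.pd2_F hx hy, H.fdy_Fi hx hy, H.fdy_Fi hx hy, Fij_symm (H.haP x hx)]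
    simp only [h2]
    rw [add_sub_right_comm, ← hsp, ← Finset.sum_add_distrib]
    exact Finset.sum_congr rfl fun r _ => by ring
  have s1 := H.s0 hx y bv i
  have s2 := H.s0 hx y gv i
  rw [e1, H.fd_Fi _ _ _ hx hy, H.fd_F _ _ hx hy, ← hp, ← hq, dFi, dF, ← hp, ← hq, dsv, dsv,
    H.dal_G hx hy, H.dlow_G hx, dal_x, dbe_G, dbe_G, dbe_x, dbe_x, H.hl_eq hx hy, H.hl_eq hx hy]
  have : ∀ A B : ℝ, 2 * A * s0low a bv x y i + 2 * B * s0low a gv x y i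
    = A * (2 * s0low a bv x y i) + B * (2 * s0low a gv x y i) := fun A B => by ring
  rw [this, s1, s2]
  field_simp
  ring

end

/-- the identity for `2Ψ_s·^βs_{i0} + 2Ψ_s̄·^γs_{i0}` with `D^i = 2G^i − 2^αG^i`. -/
theorem statement13
    (n : ℕ) (hn : 2 ≤ n)
    (U : Set (Fin n → ℝ)) (hU : IsOpen U)
    (a : (Fin n → ℝ) → Matrix (Fin n) (Fin n) ℝ)
    (haS : ∀ i j, ContDiffOn ℝ (⊤ : ℕ∞) (fun x => a x i j) U)
    (haP : ∀ x ∈ U, (a x).PosDef)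
    (bv gv : (Fin n → ℝ) → Fin n → ℝ)
    (hbS : ∀ i, ContDiffOn ℝ (⊤ : ℕ∞) (fun x => bv x i) U)
    (hgS : ∀ i, ContDiffOn ℝ (⊤ : ℕ∞) (fun x => gv x i) U)
    (b₀ g₀ : ℝ) (hb₀ : 0 < b₀) (hg₀ : 0 < g₀)
    (hb : ∀ x ∈ U, Real.sqrt (quadInv (a x) (bv x) (bv x)) < b₀)
    (hg : ∀ x ∈ U, Real.sqrt (quadInv (a x) (gv x) (gv x)) < g₀)
    (Ψ : ℝ → ℝ → ℝ)
    (hΨ : ContDiffOn ℝ (⊤ : ℕ∞) (fun p : ℝ × ℝ => Ψ p.1 p.2)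
      (Set.Ioo (-b₀) b₀ ×ˢ Set.Ioo (-g₀) g₀))
    (hΨpos : ∀ p ∈ Set.Ioo (-b₀) b₀ ×ˢ Set.Ioo (-g₀) g₀, 0 < Ψ p.1 p.2)
    (hPipos : ∀ x ∈ U, ∀ y : Fin n → ℝ, y ≠ 0 →
      0 < PiF Ψ (sVar (a x) (bv x) y) (sVar (a x) (gv x) y))
    (hΓpos : ∀ x ∈ U, ∀ y : Fin n → ℝ, y ≠ 0 →
      0 < GammaF Ψ (quadInv (a x) (bv x) (bv x)) (quadInv (a x) (gv x) (gv x))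
          (quadInv (a x) (bv x) (gv x)) (sVar (a x) (bv x) y) (sVar (a x) (gv x) y))
 :
    ∀ x ∈ U, ∀ y : Fin n → ℝ, y ≠ 0 → ∀ i : Fin n,
      ∀ p q : ℝ, p = sVar (a x) (bv x) y → q = sVar (a x) (gv x) y →
        2 * Ds Ψ p q * s0low a bv x y i + 2 * Dt Ψ p q * s0low a gv x y i =
          (∑ r, pd2 (Fm (a x) (bv x) (gv x) Ψ) y i r *
              (2 * sprayF (fun z w => Fm (a z) (bv z) (gv z) Ψ w) x y r
                - 2 * alphaG a x y r))
            - (1 / alph (a x) y) *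
                (Ds (Ds Ψ) p q * r00 a bv x y + Dt (Ds Ψ) p q * r00 a gv x y)
                * hl (a x) (bv x) y i
            - (1 / alph (a x) y) *
                (Dt (Ds Ψ) p q * r00 a bv x y + Dt (Dt Ψ) p q * r00 a gv x y)
                * hl (a x) (gv x) y i := by
  intro x hx y hy i p q hp hq
  have H : Hyp U a bv gv b₀ g₀ Ψ := ⟨hU, haS, haP, hbS, hgS, hb, hg, hΨ⟩
  exact H.main hx hy (hΨpos _ (H.mem hx hy)) (hPipos x hx y hy) (hΓpos x hx y hy) i p q hp hq
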